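/- Let q ≥ 2 be an integer and 1 − 1/(2q) < H < 1. Then (1/(−log ε)) · Σ_{n≥1} (1/n) · P(|V_n| > ε n^{2−2q(1−H)}) converges to 1/(1 − q(1−H)) as ε → 0⁺ (Spitzer's theorem for the variations of fractional Brownian motion, non-central regime). -/

import Mathlib

open MeasureTheory ProbabilityTheory Filter Real Topology

/-- A (centered) fractional Brownian motion with Hurst parameter `H`:
all finite-dimensional distributions are centered Gaussian (equivalently, every finite
linear combination of values of the process is a centered real Gaussian), with covariance
`E (B s * B t) = (s^(2H) + t^(2H) - |t-s|^(2H)) / 2` for nonnegative times. -/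
structure IsFractionalBrownianMotion {Ω : Type*} [MeasureSpace Ω]
    (B : ℝ → Ω → ℝ) (H : ℝ) : Prop where
  measurable : ∀ t : ℝ, Measurable (B t)
  gaussian_fdd : ∀ (n : ℕ) (t : Fin n → ℝ), (∀ i, 0 ≤ t i) → ∀ c : Fin n → ℝ,
    ∃ v : NNReal,
      Measure.map (fun ω => ∑ i, c i * B (t i) ω) (ℙ : Measure Ω) = gaussianReal 0 v
  covariance : ∀ s t : ℝ, 0 ≤ s → 0 ≤ t →
    ∫ ω, B s ω * B t ω ∂(ℙ : Measure Ω)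
      = (s ^ (2 * H) + t ^ (2 * H) - |t - s| ^ (2 * H)) / 2

/-- `V_n = ∑_{k=0}^{n-1} H_q (n^H (B_{(k+1)/n} - B_{k/n}))`, where `H_q` is the Hermite
polynomial of degree `q`. -/
noncomputable def hermiteVariation {Ω : Type*} [MeasureSpace Ω]
    (B : ℝ → Ω → ℝ) (H : ℝ) (q n : ℕ) (ω : Ω) : ℝ :=
  ∑ k ∈ Finset.range n,
    Polynomial.aeval
      ((n : ℝ) ^ H * (B (((k : ℝ) + 1) / n) ω - B ((k : ℝ) / n) ω))
      (Polynomial.hermite q)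


lemma memLp_pow_of_all {Ω : Type*} [MeasurableSpace Ω] {P : Measure Ω} [IsProbabilityMeasure P]
    {X : Ω → ℝ} (hX : ∀ r : ENNReal, r ≠ ⊤ → MemLp X r P) (k : ℕ) :
    ∀ r : ENNReal, r ≠ ⊤ → MemLp (fun ω => X ω ^ k) r P := by
  induction k with
  | zero => intro r hr; simpa using memLp_const (1:ℝ)
  | succ k ih =>
    intro r hr
    have h2 : (r * 2) ≠ ⊤ := ENNReal.mul_ne_top hr (by simp)
    have : ENNReal.HolderTriple (r * 2) (r * 2) r := ⟨by
      rw [ENNReal.mul_inv (by simp) (by simp), ← mul_add, ENNReal.inv_two_add_inv_two, mul_one]⟩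
    have := MemLp.mul (hX _ h2) (ih _ h2) (r := r)
    simpa [pow_succ, Pi.mul_def] using this

lemma memLp_poly_of_all {Ω : Type*} [MeasurableSpace Ω] {P : Measure Ω} [IsProbabilityMeasure P]
    {X : Ω → ℝ} (hX : ∀ r : ENNReal, r ≠ ⊤ → MemLp X r P) (p : Polynomial ℝ)
    (r : ENNReal) (hr : r ≠ ⊤) : MemLp (fun ω => p.eval (X ω)) r P := by
  simp only [Polynomial.eval_eq_sum_range]
  apply memLp_finsetSum
  intro i _
  exact (memLp_pow_of_all hX i r hr).const_mul _

lemma stein_poly (p : Polynomial ℝ) :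
    ∫ x, x * p.eval x ∂(gaussianReal 0 1) = ∫ x, p.derivative.eval x ∂(gaussianReal 0 1) := by
  have hmem : ∀ p : Polynomial ℝ, Integrable (fun x => p.eval x) (gaussianReal 0 1) := fun p =>
    memLp_one_iff_integrable.1 (memLp_poly_of_all (X := fun x : ℝ => x)
      (fun r hr => memLp_id_gaussianReal' r hr) p 1 (by simp))
  have hinteg : ∀ p : Polynomial ℝ, Integrable (fun x => p.eval x * gaussianPDFReal 0 1 x) := by
    intro p
    have := hmem p
    rw [gaussianReal_of_var_ne_zero _ one_ne_zero,
      integrable_withDensity_iff_integrable_smul' (measurable_gaussianPDF 0 1)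
        (by simp [gaussianPDF_lt_top])] at this
    simpa [toReal_gaussianPDF, mul_comm] using this
  have hd : ∀ x, HasDerivAt (fun x => - gaussianPDFReal 0 1 x) (x * gaussianPDFReal 0 1 x) x := by
    intro x
    simp only [gaussianPDFReal_def]
    have h1 : HasDerivAt (fun x : ℝ => -(x - 0) ^ 2 / (2 * ((1:NNReal):ℝ))) (-x) x := by
      have := (((hasDerivAt_id x).sub_const 0).pow 2).neg.div_const (2 * ((1:NNReal):ℝ))
      refine this.congr_deriv ?_
      simp
      ring
    refine ((h1.exp.const_mul (√(2 * π * ((1:NNReal):ℝ)))⁻¹).neg).congr_deriv ?_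
    ring
  rw [integral_gaussianReal_eq_integral_smul one_ne_zero,
    integral_gaussianReal_eq_integral_smul one_ne_zero]
  have h := integral_mul_deriv_eq_deriv_mul_of_integrable (u := fun x => p.eval x)
    (v := fun x => - gaussianPDFReal 0 1 x) (u' := fun x => p.derivative.eval x)
    (v' := fun x => x * gaussianPDFReal 0 1 x)
    (fun x _ => p.hasDerivAt x) (fun x _ => hd x)
    ((hinteg (p * Polynomial.X)).congr (ae_of_all _ fun x => by simp; ring))
    ((hinteg p.derivative).neg.congr (ae_of_all _ fun x => by simp))
    ((hinteg p).neg.congr (ae_of_all _ fun x => by simp))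
  convert h using 1
  · congr 1; ext x; simp; ring
  · rw [← integral_neg]; congr 1; ext x; simp; ring

section
variable {Ω : Type*} [MeasurableSpace Ω] {P : Measure Ω} [IsProbabilityMeasure P]

lemma memLp_gauss_poly {X : Ω → ℝ} (hX : HasGaussianLaw X P) (p : Polynomial ℝ)
    (r : ENNReal) (hr : r ≠ ⊤) : MemLp (fun ω => p.eval (X ω)) r P :=
  memLp_poly_of_all (fun _ h => hX.memLp h) p r hr

lemma integrable_gauss_poly_mul {X Y : Ω → ℝ} (hX : HasGaussianLaw X P) (hY : HasGaussianLaw Y P)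
    (p r : Polynomial ℝ) : Integrable (fun ω => p.eval (X ω) * r.eval (Y ω)) P :=
  (memLp_gauss_poly hX p 2 (by simp)).integrable_mul (memLp_gauss_poly hY r 2 (by simp))

lemma stein_pair {X Y : Ω → ℝ} (hXY : HasGaussianLaw (fun ω => (X ω, Y ω)) P)
    (hX0 : ∫ ω, X ω ∂P = 0) (hX2 : ∫ ω, X ω ^ 2 ∂P = 1) (ρ : ℝ)
    (hρ : ∫ ω, X ω * Y ω ∂P = ρ) (p r : Polynomial ℝ) :
    ∫ ω, X ω * p.eval (X ω) * r.eval (Y ω) ∂P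
      = ∫ ω, p.derivative.eval (X ω) * r.eval (Y ω) ∂P
        + ρ * ∫ ω, p.eval (X ω) * r.derivative.eval (Y ω) ∂P := by
  have hX := hXY.fst
  have hY := hXY.snd
  have hXm := hX.aemeasurable
  have hYm := hY.aemeasurable
  set Z : Ω → ℝ := fun ω => Y ω - ρ * X ω with hZ
  have hXZ : HasGaussianLaw (fun ω => (X ω, Z ω)) P := by
    let L : ℝ × ℝ →L[ℝ] ℝ × ℝ := (ContinuousLinearMap.fst ℝ ℝ ℝ).prod
      (ContinuousLinearMap.snd ℝ ℝ ℝ - ρ • ContinuousLinearMap.fst ℝ ℝ ℝ)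
    have := hXY.map_fun L
    simpa [L] using this
  have hZm := hXZ.snd.aemeasurable
  have hcov : cov[X, Z; P] = 0 := by
    rw [covariance_eq_sub hX.memLp_two hXZ.snd.memLp_two, hX0]
    have h1 : Integrable (fun ω => X ω * Y ω) P := hX.memLp_two.integrable_mul hY.memLp_two
    have h2 : Integrable (fun ω => X ω ^ 2) P := hX.memLp_two.integrable_sq
    have : ∫ ω, (X * Z) ω ∂P = ∫ ω, (X ω * Y ω - ρ * X ω ^ 2) ∂P := by
      congr 1; ext ω; simp [hZ]; ring
    rw [this, integral_sub h1 (h2.const_mul _), integral_const_mul, hX2, hρ]; simp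
  have hind := hXZ.indepFun_of_covariance_eq_zero hcov
  have hmap := (indepFun_iff_map_prod_eq_prod_map_map hXm hZm).1 hind
  have hlaw : P.map X = gaussianReal 0 1 := by
    rw [hX.map_eq_gaussianReal, hX0, variance_of_integral_eq_zero hXm hX0, hX2]; simp
  set ν := P.map Z
  have : IsProbabilityMeasure ν := Measure.isProbabilityMeasure_map hZm
  have hXZm : AEMeasurable (fun ω => (X ω, Z ω)) P := hXm.prodMk hZm
  have key : ∀ a b : Polynomial ℝ,
      ∫ ω, a.eval (X ω) * b.eval (Y ω) ∂P
        = ∫ z, ∫ x, a.eval x * b.eval (z + ρ * x) ∂(gaussianReal 0 1) ∂ν := by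
    intro a b
    have hc : Continuous (fun w : ℝ × ℝ => a.eval w.1 * b.eval (w.2 + ρ * w.1)) := by fun_prop
    have e : ∫ ω, a.eval (X ω) * b.eval (Y ω) ∂P
        = ∫ w, a.eval w.1 * b.eval (w.2 + ρ * w.1) ∂(P.map (fun ω => (X ω, Z ω))) := by
      rw [integral_map hXZm hc.aestronglyMeasurable]
      simp [hZ]
    have hi : Integrable (fun w : ℝ × ℝ => a.eval w.1 * b.eval (w.2 + ρ * w.1))
        (P.map (fun ω => (X ω, Z ω))) := by
      rw [integrable_map_measure hc.aestronglyMeasurable hXZm]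
      simpa [hZ, Function.comp_def] using integrable_gauss_poly_mul hX hY a b
    rw [e]
    rw [hmap, hlaw] at hi ⊢
    rw [integral_prod_symm _ hi]
  have hinteg : ∀ a : Polynomial ℝ, Integrable (fun x => a.eval x) (gaussianReal 0 1) := fun p =>
    memLp_one_iff_integrable.1 (memLp_poly_of_all (X := fun x : ℝ => x)
      (fun r hr => memLp_id_gaussianReal' r hr) p 1 (by simp))
  have e1 : ∀ z x : ℝ, ∀ b : Polynomial ℝ,
      b.eval (z + ρ * x) = (b.comp (Polynomial.C z + Polynomial.C ρ * Polynomial.X)).eval x := by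
    intro z x b; simp
  have hpt : ∀ z : ℝ, ∫ x, (Polynomial.X * p).eval x * r.eval (z + ρ * x) ∂(gaussianReal 0 1)
      = ∫ x, p.derivative.eval x * r.eval (z + ρ * x) ∂(gaussianReal 0 1)
        + ρ * ∫ x, p.eval x * r.derivative.eval (z + ρ * x) ∂(gaussianReal 0 1) := by
    intro z
    have h := stein_poly (p * r.comp (Polynomial.C z + Polynomial.C ρ * Polynomial.X))
    have i1 := hinteg (p.derivative * r.comp (Polynomial.C z + Polynomial.C ρ * Polynomial.X))
    have i2 := hinteg (p * r.derivative.comp (Polynomial.C z + Polynomial.C ρ * Polynomial.X))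
    rw [← integral_const_mul, ← integral_add]
    · convert h using 1
      · congr 1; ext x; simp; ring
      · congr 1; ext x; simp [Polynomial.derivative_comp]; ring
    · simpa using i1
    · simpa using i2.const_mul ρ
  have i3 := integrable_gauss_poly_mul hX hY (Polynomial.X * p) r
  have k1 := key (Polynomial.X * p) r
  have k2 := key p.derivative r
  have k3 := key p r.derivative
  have hL : ∫ ω, X ω * p.eval (X ω) * r.eval (Y ω) ∂P
      = ∫ ω, (Polynomial.X * p).eval (X ω) * r.eval (Y ω) ∂P := by simp
  have inner_int : ∀ a b : Polynomial ℝ, Integrable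
      (fun z => ∫ x, a.eval x * b.eval (z + ρ * x) ∂(gaussianReal 0 1)) ν := by
    intro a b
    have hc : Continuous (fun w : ℝ × ℝ => a.eval w.1 * b.eval (w.2 + ρ * w.1)) := by fun_prop
    have hi : Integrable (fun w : ℝ × ℝ => a.eval w.1 * b.eval (w.2 + ρ * w.1))
        (P.map (fun ω => (X ω, Z ω))) := by
      rw [integrable_map_measure hc.aestronglyMeasurable hXZm]
      simpa [hZ, Function.comp_def] using integrable_gauss_poly_mul hX hY a b
    rw [hmap, hlaw] at hi
    exact hi.integral_prod_right
  rw [hL, k1, k2, k3, ← integral_const_mul, ← integral_add (inner_int _ _)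
    ((inner_int _ _).const_mul _)]
  congr 1; ext z; exact hpt z

lemma hermite_pair {X Y : Ω → ℝ} (hXY : HasGaussianLaw (fun ω => (X ω, Y ω)) P)
    (hX0 : ∫ ω, X ω ∂P = 0) (hX2 : ∫ ω, X ω ^ 2 ∂P = 1) (ρ : ℝ)
    (hρ : ∫ ω, X ω * Y ω ∂P = ρ) (n : ℕ) : ∀ (r : Polynomial ℝ),
    ∫ ω, ((Polynomial.hermite n).map (Int.castRingHom ℝ)).eval (X ω) * r.eval (Y ω) ∂P
      = ρ ^ n * ∫ ω, (Polynomial.derivative^[n] r).eval (Y ω) ∂P := by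
  induction n with
  | zero => intro r; simp
  | succ n ih =>
    intro r
    have hs := stein_pair hXY hX0 hX2 ρ hρ ((Polynomial.hermite n).map (Int.castRingHom ℝ)) r
    have i1 := integrable_gauss_poly_mul hXY.fst hXY.snd
      (Polynomial.X * ((Polynomial.hermite n).map (Int.castRingHom ℝ))) r
    have i2 := integrable_gauss_poly_mul hXY.fst hXY.snd
      (Polynomial.derivative ((Polynomial.hermite n).map (Int.castRingHom ℝ))) r
    simp only [Polynomial.eval_mul, Polynomial.eval_X] at i1
    have := integral_sub i1 i2
    rw [hs, ih] at this
    rw [Function.iterate_succ_apply, pow_succ']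
    rw [mul_assoc]
    have e : ∀ ω, ((Polynomial.hermite (n+1)).map (Int.castRingHom ℝ)).eval (X ω) * r.eval (Y ω)
       = X ω * ((Polynomial.hermite n).map (Int.castRingHom ℝ)).eval (X ω) * r.eval (Y ω)
        - (Polynomial.derivative ((Polynomial.hermite n).map (Int.castRingHom ℝ))).eval (X ω)
          * r.eval (Y ω) := by
      intro ω
      simp only [Polynomial.hermite_succ, Polynomial.map_sub, Polynomial.map_mul, Polynomial.map_X,
        Polynomial.eval_sub, Polynomial.eval_mul, Polynomial.eval_X, Polynomial.derivative_map]
      ring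
    simp only [e]
    rw [this]; ring

lemma aeval_hermite_eq (q : ℕ) (x : ℝ) : Polynomial.aeval x (Polynomial.hermite q)
    = ((Polynomial.hermite q).map (Int.castRingHom ℝ)).eval x := by
  simp [Polynomial.aeval_def, Polynomial.eval_map]

lemma hermite_cov {X Y : Ω → ℝ} (hXY : HasGaussianLaw (fun ω => (X ω, Y ω)) P)
    (hX0 : ∫ ω, X ω ∂P = 0) (hX2 : ∫ ω, X ω ^ 2 ∂P = 1) (ρ : ℝ)
    (hρ : ∫ ω, X ω * Y ω ∂P = ρ) (q : ℕ) :
    ∫ ω, Polynomial.aeval (X ω) (Polynomial.hermite q) *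
      Polynomial.aeval (Y ω) (Polynomial.hermite q) ∂P = q.factorial * ρ ^ q := by
  simp only [aeval_hermite_eq]
  rw [hermite_pair hXY hX0 hX2 ρ hρ]
  have : Polynomial.derivative^[q] ((Polynomial.hermite q).map (Int.castRingHom ℝ))
      = Polynomial.C (q.factorial : ℝ) := by
    have hm := (Polynomial.hermite_monic q).map (Int.castRingHom ℝ)
    have hdeg : ((Polynomial.hermite q).map (Int.castRingHom ℝ)).natDegree = q := by
      rw [(Polynomial.hermite_monic q).natDegree_map, Polynomial.natDegree_hermite]
    have := Polynomial.iterate_derivative_eq_factorial_smul_sum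
      ((Polynomial.hermite q).map (Int.castRingHom ℝ)) q
    rw [Polynomial.eq_C_of_natDegree_eq_zero (p := Polynomial.derivative^[q] _)
      (Nat.le_zero.1 ((Polynomial.natDegree_iterate_derivative _ _).trans (by simp [hdeg]))),
      Polynomial.coeff_iterate_derivative]
    congr 1
    simp only [zero_add, Polynomial.coeff_map, Polynomial.coeff_hermite_self]
    simp [Nat.descFactorial_self]
  rw [this]; simp [mul_comm]
end


lemma lagrange_bound (N d : ℕ) : ∃ C : ℝ, 1 ≤ C ∧ ∀ (R : Polynomial ℝ), R.natDegree ≤ d →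
    ∀ δ : ℝ, ∀ J ⊆ Finset.range N, d + 1 ≤ J.card → (∀ j ∈ J, |R.eval (j:ℝ)| ≤ δ) →
      |R.eval 0| ≤ C * δ ∧ |R.eval 1| ≤ C * δ := by
  classical
  let w : Finset ℕ → ℝ := fun J => ∑ j ∈ J,
      (|(Lagrange.basis J (fun j : ℕ => (j:ℝ)) j).eval 0|
        + |(Lagrange.basis J (fun j : ℕ => (j:ℝ)) j).eval 1|)
  have hw : ∀ J, 0 ≤ w J := fun J => Finset.sum_nonneg fun j _ => by positivity
  refine ⟨1 + ∑ J ∈ (Finset.range N).powerset, w J, ?_, ?_⟩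
  · have := Finset.sum_nonneg (s := (Finset.range N).powerset) (f := w) (fun J _ => hw J)
    linarith
  intro R hR δ J hJ hcard hδ
  have hJne : J.Nonempty := Finset.card_pos.1 (by omega)
  have hδ0 : 0 ≤ δ := by
    obtain ⟨j, hj⟩ := hJne
    exact (abs_nonneg _).trans (hδ j hj)
  have hwle : w J ≤ ∑ J ∈ (Finset.range N).powerset, w J :=
    Finset.single_le_sum (f := w) (fun J _ => hw J) (Finset.mem_powerset.2 hJ)
  have hR0 : R = Lagrange.interpolate J (fun j : ℕ => (j:ℝ)) (fun j => R.eval (j:ℝ)) := by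
    apply Lagrange.eq_interpolate (fun a _ b _ h => by exact_mod_cast h)
    by_cases h0 : R = 0
    · simp [h0]
    · rw [Polynomial.degree_eq_natDegree h0]; exact_mod_cast (by omega)
  have gen : ∀ t : ℝ, (∀ j ∈ J, |(Lagrange.basis J (fun j : ℕ => (j:ℝ)) j).eval t| ≤
      (|(Lagrange.basis J (fun j : ℕ => (j:ℝ)) j).eval 0|
        + |(Lagrange.basis J (fun j : ℕ => (j:ℝ)) j).eval 1|)) →
      |R.eval t| ≤ (1 + ∑ J ∈ (Finset.range N).powerset, w J) * δ := by
    intro t ht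
    have : R.eval t = ∑ j ∈ J, R.eval (j:ℝ) *
        (Lagrange.basis J (fun j : ℕ => (j:ℝ)) j).eval t := by
      conv_lhs => rw [hR0, Lagrange.interpolate_apply]
      simp [Polynomial.eval_finsetSum]
    rw [this]
    calc |∑ j ∈ J, R.eval (j:ℝ) * (Lagrange.basis J (fun j : ℕ => (j:ℝ)) j).eval t|
        ≤ ∑ j ∈ J, |R.eval (j:ℝ) * (Lagrange.basis J (fun j : ℕ => (j:ℝ)) j).eval t| :=
          Finset.abs_sum_le_sum_abs _ _
      _ ≤ ∑ j ∈ J, δ * (|(Lagrange.basis J (fun j : ℕ => (j:ℝ)) j).eval 0|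
        + |(Lagrange.basis J (fun j : ℕ => (j:ℝ)) j).eval 1|) := by
          apply Finset.sum_le_sum
          intro j hj
          rw [abs_mul]
          exact mul_le_mul (hδ j hj) (ht j hj) (abs_nonneg _) hδ0
      _ = δ * w J := by rw [Finset.mul_sum]
      _ ≤ _ := by rw [mul_comm]; gcongr; linarith
  exact ⟨gen 0 fun j _ => by simp, gen 1 fun j _ => by simp⟩

lemma rot_poly (q m : ℕ) (h : Polynomial ℝ) (hh : h.natDegree ≤ q) (x y : Fin m → ℝ) :
    ∃ R : Polynomial ℝ, R.natDegree ≤ 2 * q ∧ ∀ s : ℝ, R.eval s = (1 + s ^ 2) ^ q *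
      ∑ k, h.eval ((1 - s ^ 2) / (1 + s ^ 2) * x k + 2 * s / (1 + s ^ 2) * y k) := by
  open Polynomial in
  refine ⟨∑ k, ∑ i ∈ Finset.range (q + 1), C (h.coeff i) *
    (C (x k) * (1 - X ^ 2) + C (y k) * (2 * X)) ^ i * (1 + X ^ 2) ^ (q - i), ?_, ?_⟩
  · apply Polynomial.natDegree_sum_le_of_forall_le
    intro k _
    apply Polynomial.natDegree_sum_le_of_forall_le
    intro i hi
    have hi' : i ≤ q := by simpa [Nat.lt_succ_iff] using hi
    have e : 2 * q = (0 + i * 2) + (q - i) * 2 := by omega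
    rw [e]
    refine Polynomial.natDegree_mul_le_of_le (Polynomial.natDegree_mul_le_of_le
      (Polynomial.natDegree_C _).le (Polynomial.natDegree_pow_le_of_le _ ?_))
      (Polynomial.natDegree_pow_le_of_le _ ?_)
    · compute_degree
    · compute_degree
  · intro s
    have hs : (1 + s ^ 2) ≠ 0 := by positivity
    rw [Polynomial.eval_finsetSum, Finset.mul_sum]
    refine Finset.sum_congr rfl fun k _ => ?_
    rw [Polynomial.eval_finsetSum, Polynomial.eval_eq_sum_range' (Nat.lt_succ_of_le hh),
      Finset.mul_sum]
    refine Finset.sum_congr rfl fun i hi => ?_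
    have hi' : i ≤ q := by simpa [Nat.lt_succ_iff] using hi
    have e : (1 - s ^ 2) / (1 + s ^ 2) * x k + 2 * s / (1 + s ^ 2) * y k
      = (x k * (1 - s ^ 2) + y k * (2 * s)) / (1 + s ^ 2) := by field_simp
    rw [e, div_pow]
    have e2 : (1 + s ^ 2) ^ q = (1 + s ^ 2) ^ (q - i) * (1 + s ^ 2) ^ i := by
      rw [← pow_add]; congr 1; omega
    rw [e2]
    simp
    field_simp

lemma anti_step (q N : ℕ) : ∃ C : ℝ, 0 < C ∧ ∀ (m : ℕ) (μ : Measure (Fin m → ℝ)) [IsGaussian μ],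
    (∀ L : StrongDual ℝ (Fin m → ℝ), μ[L] = 0) → ∀ h : Polynomial ℝ, h.natDegree ≤ q → ∀ δ : ℝ,
      N * μ.real {x | |∑ k, h.eval (x k)| ≤ δ}
        ≤ 2 * q + N * (μ.real {x | |∑ k, h.eval (x k)| ≤ C * δ}) ^ 2 := by
  classical
  obtain ⟨C0, hC0, hlag⟩ := lagrange_bound N (2 * q)
  refine ⟨C0 * (1 + (N:ℝ) ^ 2) ^ q, by positivity, ?_⟩
  intro m μ _ hμ h hh δ
  set C := C0 * (1 + (N:ℝ) ^ 2) ^ q with hC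
  set Q : (Fin m → ℝ) → ℝ := fun x => ∑ k, h.eval (x k) with hQ
  have hQc : Continuous Q := by fun_prop
  let θ : ℕ → ℝ := fun j => 2 * arctan j
  have hcos : ∀ j : ℕ, cos (θ j) = (1 - (j:ℝ) ^ 2) / (1 + (j:ℝ) ^ 2) := by
    intro j
    simp only [θ]
    rw [cos_two_mul, cos_sq_arctan]
    field_simp; ring
  have hsin : ∀ j : ℕ, sin (θ j) = 2 * (j:ℝ) / (1 + (j:ℝ) ^ 2) := by
    intro j
    simp only [θ]
    rw [sin_two_mul, sin_arctan, cos_arctan]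
    have : √(1 + (j:ℝ) ^ 2) ^ 2 = 1 + (j:ℝ)^2 := Real.sq_sqrt (by positivity)
    have h2 : √(1 + (j:ℝ) ^ 2) ≠ 0 := by positivity
    calc 2 * ((j:ℝ) / √(1 + (j:ℝ) ^ 2)) * (1 / √(1 + (j:ℝ) ^ 2))
        = 2 * (j:ℝ) / √(1 + (j:ℝ) ^ 2) ^ 2 := by field_simp
      _ = _ := by rw [this]
  let A : ℕ → Set ((Fin m → ℝ) × (Fin m → ℝ)) := fun j =>
    {w | |Q (cos (θ j) • w.1 + sin (θ j) • w.2)| ≤ δ}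
  let D : Set (Fin m → ℝ) := {x | |Q x| ≤ C * δ}
  have hAm : ∀ j, MeasurableSet (A j) := fun j =>
    measurableSet_le (by fun_prop) (by fun_prop)
  have hDm : MeasurableSet D := measurableSet_le (by fun_prop) (by fun_prop)
  have hA : ∀ j, (μ.prod μ).real (A j) = μ.real {x | |Q x| ≤ δ} := by
    intro j
    have hrot := IsGaussian.map_rotation_eq_self_of_forall_strongDual_eq_zero hμ (θ j)
    have hS : MeasurableSet {x | |Q x| ≤ δ} := measurableSet_le (by fun_prop) (by fun_prop)
    have e1 : (μ.prod μ) ({x | |Q x| ≤ δ} ×ˢ Set.univ) = μ {x | |Q x| ≤ δ} := by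
      rw [Measure.prod_prod]; simp
    rw [Measure.real, Measure.real, ← e1]
    conv_rhs => rw [← hrot]
    rw [Measure.map_apply (by fun_prop) (hS.prod MeasurableSet.univ)]
    congr 2
    ext w
    simp [A, ContinuousLinearMap.rotation_apply]
  have hD : (μ.prod μ).real (D ×ˢ D) = μ.real D ^ 2 := by
    rw [measureReal_prod_prod, sq]
  have hpt : ∀ w, ∑ j ∈ Finset.range N, (A j).indicator (fun _ => (1:ℝ)) w
      ≤ 2 * q + N * (D ×ˢ D).indicator (fun _ => (1:ℝ)) w := by
    intro w
    let J := (Finset.range N).filter (fun j => w ∈ A j)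
    have hsum : ∑ j ∈ Finset.range N, (A j).indicator (fun _ => (1:ℝ)) w = J.card := by
      simp [J, Set.indicator_apply, Finset.sum_boole]
    rw [hsum]
    by_cases hc : J.card ≤ 2 * q
    · have : (J.card : ℝ) ≤ 2 * q := by exact_mod_cast hc
      have h2 : 0 ≤ (D ×ˢ D).indicator (fun _ => (1:ℝ)) w :=
        Set.indicator_nonneg (fun _ _ => zero_le_one) _
      nlinarith [Nat.cast_nonneg (α := ℝ) N]
    · have hc' : 2 * q + 1 ≤ J.card := by omega
      obtain ⟨R, hRd, hR⟩ := rot_poly q m h hh w.1 w.2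
      have hJr : J ⊆ Finset.range N := Finset.filter_subset _ _
      have hδ0 : 0 ≤ δ := by
        obtain ⟨j, hj⟩ := Finset.card_pos.1 (by omega : 0 < J.card)
        have : |Q (cos (θ j) • w.1 + sin (θ j) • w.2)| ≤ δ := (Finset.mem_filter.1 hj).2
        exact (abs_nonneg _).trans this
      have hbd : ∀ j ∈ J, |R.eval (j:ℝ)| ≤ (1 + (N:ℝ)^2) ^ q * δ := by
        intro j hj
        have h1 : |Q (cos (θ j) • w.1 + sin (θ j) • w.2)| ≤ δ := (Finset.mem_filter.1 hj).2
        have hjN : (j:ℝ) ≤ N := by exact_mod_cast (Finset.mem_range.1 (hJr hj)).le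
        rw [hR, abs_mul, abs_of_nonneg (by positivity)]
        have e : Q (cos (θ j) • w.1 + sin (θ j) • w.2) = ∑ k, h.eval
          ((1 - (j:ℝ) ^ 2) / (1 + (j:ℝ) ^ 2) * w.1 k + 2 * (j:ℝ) / (1 + (j:ℝ) ^ 2) * w.2 k) := by
          simp [hQ, hcos, hsin]
        rw [e] at h1
        gcongr
      obtain ⟨h0, h1⟩ := hlag R hRd _ J hJr hc' hbd
      have hwD : w ∈ D ×ˢ D := by
        constructor
        · change |Q w.1| ≤ C * δ
          rw [hR] at h0
          simpa [hQ, hC, mul_assoc] using h0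
        · change |Q w.2| ≤ C * δ
          rw [hR, abs_mul] at h1
          have e : |∑ k, h.eval ((1 - (1:ℝ) ^ 2) / (1 + (1:ℝ) ^ 2) * w.1 k
            + 2 * (1:ℝ) / (1 + (1:ℝ) ^ 2) * w.2 k)| = |Q w.2| := by
            have : (2:ℝ) / (1 + 1) = 1 := by norm_num
            simp [hQ, this]
          rw [e] at h1
          have h2 : (1:ℝ) ≤ |(1 + (1:ℝ) ^ 2) ^ q| := by
            rw [abs_of_nonneg (by positivity)]
            exact one_le_pow₀ (by norm_num)
          calc |Q w.2| ≤ |(1 + (1:ℝ) ^ 2) ^ q| * |Q w.2| :=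
                le_mul_of_one_le_left (abs_nonneg _) h2
            _ ≤ _ := by rw [hC, mul_assoc]; exact h1
      rw [Set.indicator_of_mem hwD]
      have : (J.card : ℝ) ≤ N := by
        have := Finset.card_le_card hJr
        rw [Finset.card_range] at this
        exact_mod_cast this
      have h3 : (0:ℝ) ≤ q := by positivity
      linarith
  have hinteg := integral_mono (μ := μ.prod μ)
    (f := fun w => ∑ j ∈ Finset.range N, (A j).indicator (fun _ => (1:ℝ)) w)
    (g := fun w => 2 * q + N * (D ×ˢ D).indicator (fun _ => (1:ℝ)) w)
    (integrable_finsetSum _ fun j _ => (integrable_const (1:ℝ)).indicator (hAm j))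
    ((integrable_const _).add
      (((integrable_const (1:ℝ)).indicator (hDm.prod hDm)).const_mul _)) hpt
  rw [integral_finsetSum _ (fun j _ => (integrable_const (1:ℝ)).indicator (hAm j)),
    integral_add (integrable_const _)
      (((integrable_const (1:ℝ)).indicator (hDm.prod hDm)).const_mul _)] at hinteg
  have hlast : ∫ w, (N:ℝ) * (D ×ˢ D).indicator (fun _ => (1:ℝ)) w ∂(μ.prod μ)
      = N * μ.real D ^ 2 := by
    rw [integral_const_mul, integral_indicator_const _ (hDm.prod hDm), hD]; simp
  rw [hlast] at hinteg
  simp only [integral_indicator_const _ (hAm _), hA] at hinteg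
  simpa using hinteg

lemma anti_limit {ι : Type*} (p : ι → ℝ → ℝ) (hp0 : ∀ n δ, 0 ≤ p n δ)
    (d : ℝ) (κ δ₀ : ℝ) (hκ : 0 < κ) (hδ₀ : 0 < δ₀)
    (hstart : ∀ n, p n δ₀ ≤ 1 - κ) [Nonempty ι]
    (hstep : ∀ N : ℕ, ∃ C : ℝ, 0 < C ∧ ∀ n δ, N * p n δ ≤ d + N * (p n (C * δ)) ^ 2) :
    ∀ η > 0, ∃ δ > 0, ∀ n, p n δ ≤ η := by
  let S : Set ℝ := {u | ∃ δ > 0, ∀ n, p n δ ≤ u}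
  have hS0 : ∀ u ∈ S, 0 ≤ u := by
    rintro u ⟨δ, _, h⟩
    exact (hp0 (Classical.arbitrary ι) δ).trans (h _)
  have hbdd : BddBelow S := ⟨0, hS0⟩
  have h1 : 1 - κ ∈ S := ⟨δ₀, hδ₀, hstart⟩
  have hsq : ∀ u ∈ S, ∀ v, u ^ 2 < v → v ∈ S := by
    rintro u ⟨δ, hδ, hu⟩ v hv
    obtain ⟨N, hN⟩ := exists_nat_gt (|d| / (v - u ^ 2))
    have hvu : 0 < v - u ^ 2 := by linarith
    have hN0 : (0:ℝ) < N := lt_of_le_of_lt (by positivity) hN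
    obtain ⟨C, hC, hst⟩ := hstep N
    refine ⟨δ / C, by positivity, fun n => ?_⟩
    have := hst n (δ / C)
    rw [mul_div_cancel₀ _ hC.ne'] at this
    have h2 : (p n δ) ^ 2 ≤ u ^ 2 := pow_le_pow_left₀ (hp0 _ _) (hu n) 2
    rw [div_lt_iff₀ hvu] at hN
    have h3 := le_abs_self d
    have h4 : (N:ℝ) * p n δ ^ 2 ≤ N * u ^ 2 := by gcongr
    have : N * p n (δ / C) ≤ N * v := by nlinarith
    exact le_of_mul_le_mul_left this hN0
  have hl0 : sInf S ≤ 0 := by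
    by_contra hpos
    push Not at hpos
    set l := sInf S
    have hl1 : l < 1 := (csInf_le hbdd h1).trans_lt (by linarith)
    have hlt : l < √l := by
      rw [Real.lt_sqrt hpos.le]; nlinarith
    obtain ⟨u, huS, hu⟩ := exists_lt_of_csInf_lt ⟨_, h1⟩ hlt
    have hu2 : u ^ 2 < l := by
      rw [Real.lt_sqrt (hS0 u huS)] at hu; exact hu
    have := csInf_le hbdd (hsq u huS ((u ^ 2 + l) / 2) (by linarith))
    linarith
  intro η hη
  obtain ⟨u, ⟨δ, hδ, hu⟩, hlt⟩ := exists_lt_of_csInf_lt ⟨_, h1⟩ (hl0.trans_lt hη)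
  exact ⟨δ, hδ, fun n => (hu n).trans hlt.le⟩


lemma tail_sq (M : ℕ) (hM : 0 < M) (n : ℕ) :
    ∑ i ∈ Finset.range n, 1 / (((M + i : ℕ) : ℝ) + 1) ^ 2 ≤ 1 / M - 1 / ((M + n : ℕ) : ℝ) := by
  induction n with
  | zero => simp
  | succ n ih =>
    rw [Finset.sum_range_succ]
    have hx : (0:ℝ) < ((M + n : ℕ) : ℝ) := by positivity
    have e : ((M + (n + 1) : ℕ) : ℝ) = ((M + n : ℕ) : ℝ) + 1 := by push_cast; ring
    rw [e]
    set x : ℝ := ((M + n : ℕ) : ℝ)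
    have : 1 / (x + 1) ^ 2 ≤ 1 / x - 1 / (x + 1) := by
      rw [div_sub_div _ _ hx.ne' (by positivity), div_le_div_iff₀ (by positivity) (by positivity)]
      nlinarith
    linarith

lemma harm_eq (M : ℕ) : ∑ i ∈ Finset.range M, 1 / ((i:ℝ) + 1) = ((harmonic M : ℚ) : ℝ) := by
  simp [harmonic]

lemma spitzer_upper (a : ℝ) (ha : 1 / 2 < a) (f : ℕ → ℝ → ℝ) (h0 : ∀ n x, 0 ≤ f n x)
    (h1 : ∀ n x, f n x ≤ 1) (C : ℝ) (hC0 : 0 ≤ C) (hC : ∀ n x, 0 < x → f n x ≤ C / x ^ 2)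
    (ε : ℝ) (hε : 0 < ε) (hε1 : ε < 1) (n : ℕ) :
    ∑ i ∈ Finset.range n, (1 / ((i:ℝ) + 1)) * f i (ε * ((i:ℝ) + 1) ^ a)
      ≤ (1 / a) * (-Real.log ε) + (1 + Real.log 2 + C) := by
  have ha0 : 0 < a := by linarith
  set E : ℝ := ε ^ (-(1 / a)) with hE
  have hE1 : 1 ≤ E := Real.one_le_rpow_of_pos_of_le_one_of_nonpos hε hε1.le (by
    have : 0 < 1 / a := by positivity
    linarith)
  have hE0 : 0 < E := by linarith
  have hεE : ε * E ^ a = 1 := by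
    rw [hE, ← Real.rpow_mul hε.le]
    have : -(1 / a) * a = -1 := by field_simp
    rw [this, Real.rpow_neg_one]; field_simp
  have hlogE : Real.log E = (1 / a) * (-Real.log ε) := by
    rw [hE, Real.log_rpow hε]; ring
  set M : ℕ := ⌈E⌉₊ with hMdef
  have hM : 0 < M := Nat.ceil_pos.2 hE0
  have hME : E ≤ M := Nat.le_ceil _
  have hM2 : (M:ℝ) ≤ 2 * E := by
    have := (Nat.ceil_lt_add_one hE0.le).le
    linarith
  have hM0 : (0:ℝ) < M := by exact_mod_cast hM
  have hnn : ∀ i : ℕ, 0 ≤ (1 / ((i:ℝ) + 1)) * f i (ε * ((i:ℝ) + 1) ^ a) := fun i =>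
    mul_nonneg (by positivity) (h0 _ _)
  calc ∑ i ∈ Finset.range n, (1 / ((i:ℝ) + 1)) * f i (ε * ((i:ℝ) + 1) ^ a)
      ≤ ∑ i ∈ Finset.range (M + n), (1 / ((i:ℝ) + 1)) * f i (ε * ((i:ℝ) + 1) ^ a) :=
        Finset.sum_le_sum_of_subset_of_nonneg (Finset.range_mono (by omega)) (fun i _ _ => hnn i)
    _ = ∑ i ∈ Finset.range M, (1 / ((i:ℝ) + 1)) * f i (ε * ((i:ℝ) + 1) ^ a)
        + ∑ i ∈ Finset.range n, (1 / (((M + i : ℕ):ℝ) + 1)) *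
          f (M + i) (ε * (((M + i : ℕ):ℝ) + 1) ^ a) := Finset.sum_range_add _ _ _
    _ ≤ (1 + Real.log 2 + Real.log E) + C := by
        gcongr
        · calc _ ≤ ∑ i ∈ Finset.range M, 1 / ((i:ℝ) + 1) := by
                apply Finset.sum_le_sum
                intro i _
                exact mul_le_of_le_one_right (by positivity) (h1 _ _)
            _ = _ := harm_eq M
            _ ≤ 1 + Real.log M := by exact_mod_cast harmonic_le_one_add_log M
            _ ≤ 1 + Real.log (2 * E) := by gcongr
            _ = _ := by rw [Real.log_mul (by norm_num) hE0.ne']; ring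
        · calc _ ≤ ∑ i ∈ Finset.range n, (C * E) * (1 / (((M + i : ℕ) : ℝ) + 1) ^ 2) := by
                apply Finset.sum_le_sum
                intro i _
                set x : ℝ := ((M + i : ℕ) : ℝ) + 1 with hx
                have hxE : E ≤ x := by
                  rw [hx]; push_cast
                  have : (0:ℝ) ≤ i := by positivity
                  linarith
                have hx0 : 0 < x := by linarith
                have hbase : ε * x ^ a = (x / E) ^ a := by
                  rw [Real.div_rpow hx0.le hE0.le, eq_div_iff (by positivity), mul_right_comm, hεE,
                    one_mul]
                have hsq : x / E ≤ (ε * x ^ a) ^ 2 := by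
                  rw [hbase, ← Real.rpow_natCast, ← Real.rpow_mul (by positivity)]
                  apply Real.self_le_rpow_of_one_le
                  · rw [le_div_iff₀ hE0]; linarith
                  · push_cast; linarith
                have := hC (M + i) (ε * x ^ a) (by positivity)
                calc 1 / x * f (M + i) (ε * x ^ a) ≤ 1 / x * (C / (x / E)) := by
                      gcongr
                      refine this.trans ?_
                      gcongr
                  _ = _ := by field_simp
            _ = C * E * ∑ i ∈ Finset.range n, 1 / (((M + i : ℕ) : ℝ) + 1) ^ 2 := by
                rw [Finset.mul_sum]
            _ ≤ C * E * (1 / M) := by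
                gcongr
                refine (tail_sq M hM n).trans ?_
                have : (0:ℝ) ≤ 1 / ((M + n : ℕ) : ℝ) := by positivity
                linarith
            _ ≤ C := by
                have : E * (1 / M) ≤ 1 := by
                  rw [mul_one_div, div_le_one hM0]; exact hME
                rw [mul_assoc]
                exact mul_le_of_le_one_right hC0 this
    _ = _ := by rw [hlogE]; ring

lemma spitzer_lower (a : ℝ) (ha : 0 < a) (f : ℕ → ℝ → ℝ) 
    (η δ : ℝ) (hη : η ≤ 1) (hδ : 0 < δ) (hlow : ∀ n x, x ≤ δ → 1 - η ≤ f n x)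
    (ε : ℝ) (hε : 0 < ε) :
    ∃ M : ℕ, (1 - η) * ((1 / a) * (Real.log δ - Real.log ε)) ≤
      ∑ i ∈ Finset.range M, (1 / ((i:ℝ) + 1)) * f i (ε * ((i:ℝ) + 1) ^ a) := by
  set E : ℝ := (δ / ε) ^ (1 / a) with hE
  have hE0 : 0 < E := by positivity
  have hEa : E ^ a = δ / ε := by
    rw [hE, ← Real.rpow_mul (by positivity)]
    have : 1 / a * a = 1 := by field_simp
    rw [this, Real.rpow_one]
  refine ⟨⌊E⌋₊, ?_⟩
  have hlogE : Real.log E = (1 / a) * (Real.log δ - Real.log ε) := by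
    rw [hE, Real.log_rpow (by positivity), Real.log_div hδ.ne' hε.ne']
  rw [← hlogE]
  calc (1 - η) * Real.log E ≤ (1 - η) * ∑ i ∈ Finset.range ⌊E⌋₊, 1 / ((i:ℝ) + 1) := by
        apply mul_le_mul_of_nonneg_left _ (by linarith)
        rw [harm_eq]
        refine le_trans ?_ (log_add_one_le_harmonic ⌊E⌋₊)
        apply Real.log_le_log hE0
        push_cast
        exact (Nat.lt_floor_add_one E).le
    _ = ∑ i ∈ Finset.range ⌊E⌋₊, (1 / ((i:ℝ) + 1)) * (1 - η) := by
        rw [Finset.mul_sum]; exact Finset.sum_congr rfl fun i _ => mul_comm _ _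
    _ ≤ _ := by
        apply Finset.sum_le_sum
        intro i hi
        gcongr
        apply hlow
        have h2 : (i:ℝ) + 1 ≤ E := by
          have : i + 1 ≤ ⌊E⌋₊ := Finset.mem_range.1 hi
          have := (Nat.le_floor_iff hE0.le).1 this
          exact_mod_cast this
        calc ε * ((i:ℝ) + 1) ^ a ≤ ε * E ^ a := by gcongr
          _ = δ := by rw [hEa]; field_simp

lemma spitzer (a : ℝ) (ha : 1 / 2 < a) (f : ℕ → ℝ → ℝ) (h0 : ∀ n x, 0 ≤ f n x)
    (h1 : ∀ n x, f n x ≤ 1) (C : ℝ) (hC0 : 0 ≤ C) (hC : ∀ n x, 0 < x → f n x ≤ C / x ^ 2)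
    (hlow : ∀ η > 0, ∃ δ > 0, ∀ n x, x ≤ δ → 1 - η ≤ f n x) :
    Tendsto (fun ε : ℝ => (1 / (-Real.log ε)) *
      ∑' n : ℕ, (1 / ((n : ℝ) + 1)) * f n (ε * ((n:ℝ) + 1) ^ a)) (𝓝[>] 0) (𝓝 (1 / a)) := by
  have ha0 : 0 < a := by linarith
  have hlog : Tendsto (fun ε : ℝ => -Real.log ε) (𝓝[>] 0) atTop :=
    tendsto_neg_atBot_atTop.comp Real.tendsto_log_nhdsGT_zero
  have hinv : Tendsto (fun ε : ℝ => 1 / (-Real.log ε)) (𝓝[>] 0) (𝓝 0) := by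
    simpa only [one_div, Function.comp_def] using tendsto_inv_atTop_zero.comp hlog
  have hsmall : ∀ᶠ ε : ℝ in 𝓝[>] 0, 0 < ε ∧ ε < 1 :=
    Ioo_mem_nhdsGT zero_lt_one
  have hnn : ∀ ε : ℝ, ∀ i : ℕ, 0 ≤ (1 / ((i:ℝ) + 1)) * f i (ε * ((i:ℝ) + 1) ^ a) := fun ε i =>
    mul_nonneg (by positivity) (h0 _ _)
  set K := 1 + Real.log 2 + C
  rw [tendsto_order]
  constructor
  · intro b hb
    obtain ⟨η, hη0, hη1, hηb⟩ : ∃ η : ℝ, 0 < η ∧ η ≤ 1 ∧ b < (1 - η) * (1 / a) := by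
      have ht : Tendsto (fun η : ℝ => (1 - η) * (1 / a)) (𝓝[>] 0) (𝓝 ((1 - 0) * (1 / a))) := by
        apply Tendsto.mono_left _ nhdsWithin_le_nhds
        exact (Continuous.tendsto (by fun_prop) 0)
      have := (ht.eventually_const_lt (by simpa using hb)).and
        (Ioo_mem_nhdsGT (zero_lt_one (α := ℝ)))
      obtain ⟨η, h, h'⟩ := this.exists
      exact ⟨η, h'.1, h'.2.le, h⟩
    obtain ⟨δ, hδ, hl⟩ := hlow η hη0
    have ht : Tendsto (fun ε : ℝ => (1 - η) * (1 / a) * (Real.log δ * (1 / (-Real.log ε)) + 1))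
        (𝓝[>] 0) (𝓝 ((1 - η) * (1 / a) * (Real.log δ * 0 + 1))) :=
      ((hinv.const_mul _).add_const 1).const_mul _
    filter_upwards [hsmall, ht.eventually_const_lt (by simpa using hηb)] with ε hε hb'
    have hl0 : 0 < -Real.log ε := by
      have := Real.log_neg hε.1 hε.2; linarith
    have hsum : Summable (fun n : ℕ => (1 / ((n : ℝ) + 1)) * f n (ε * ((n:ℝ) + 1) ^ a)) :=
      summable_of_sum_range_le (hnn ε) (spitzer_upper a ha f h0 h1 C hC0 hC ε hε.1 hε.2)
    obtain ⟨M, hM⟩ := spitzer_lower a ha0 f η δ hη1 hδ hl ε hε.1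
    have := hM.trans (hsum.sum_le_tsum _ (fun i _ => hnn ε i))
    refine hb'.trans_le ?_
    calc (1 - η) * (1 / a) * (Real.log δ * (1 / (-Real.log ε)) + 1)
        = (1 / (-Real.log ε)) * ((1 - η) * ((1 / a) * (Real.log δ - Real.log ε))) := by
          have : -Real.log ε ≠ 0 := hl0.ne'
          have : Real.log ε ≠ 0 := by intro h; apply this; simp [h]
          field_simp
          ring
      _ ≤ _ := by gcongr
  · intro b hb
    have ht : Tendsto (fun ε : ℝ => 1 / a + K * (1 / (-Real.log ε)))
        (𝓝[>] 0) (𝓝 (1 / a + K * 0)) := (hinv.const_mul _).const_add _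
    filter_upwards [hsmall, ht.eventually_lt_const (by simpa using hb)] with ε hε hb'
    have hl0 : 0 < -Real.log ε := by
      have := Real.log_neg hε.1 hε.2; linarith
    have := Real.tsum_le_of_sum_range_le (hnn ε)
      (spitzer_upper a ha f h0 h1 C hC0 hC ε hε.1 hε.2)
    refine lt_of_le_of_lt ?_ hb'
    calc _ ≤ (1 / (-Real.log ε)) * ((1 / a) * (-Real.log ε) + K) := by gcongr
      _ = _ := by
        set l := -Real.log ε
        have : l ≠ 0 := hl0.ne'
        field_simp

section fbm
variable {Ω : Type*} [MeasureSpace Ω] [IsProbabilityMeasure (ℙ : Measure Ω)] {B : ℝ → Ω → ℝ} {H : ℝ}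

lemma fbm_gauss (hB : IsFractionalBrownianMotion B H) (m : ℕ) (t : Fin m → ℝ) (ht : ∀ i, 0 ≤ t i) :
    HasGaussianLaw (fun ω i => B (t i) ω) (ℙ : Measure Ω) := by
  have hm : Measurable (fun ω i => B (t i) ω) := measurable_pi_lambda _ fun i => hB.measurable _
  refine ⟨isGaussian_of_map_eq_gaussianReal fun L => ?_⟩
  obtain ⟨v, hv⟩ := hB.gaussian_fdd m t ht (fun i => L (Pi.single i 1))
  refine ⟨0, v, ?_⟩
  rw [Measure.map_map (by fun_prop) hm, ← hv]
  congr 1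
  ext ω
  have : (fun i => B (t i) ω) = ∑ i, B (t i) ω • (Pi.single i (1:ℝ) : Fin m → ℝ) := by
    ext j
    simp [Finset.sum_apply, Pi.single_apply]
  simp only [Function.comp]
  rw [this, map_sum]
  simp [mul_comm]

lemma fbm_mean (hB : IsFractionalBrownianMotion B H) (t : ℝ) (ht : 0 ≤ t) :
    ∫ ω, B t ω ∂(ℙ : Measure Ω) = 0 := by
  obtain ⟨v, hv⟩ := hB.gaussian_fdd 1 (fun _ => t) (fun _ => ht) (fun _ => 1)
  simp only [Finset.univ_unique, one_mul, Finset.sum_const, Finset.card_singleton, one_smul] at hv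
  have h := integral_map (μ := (ℙ : Measure Ω)) (hB.measurable t).aemeasurable
    (f := fun x : ℝ => x) (by fun_prop)
  rw [← h]
  have e : Measure.map (B t) (ℙ : Measure Ω) = gaussianReal 0 v := hv
  rw [e]
  exact integral_id_gaussianReal

lemma fbm_gauss1 (hB : IsFractionalBrownianMotion B H) (t : ℝ) (ht : 0 ≤ t) :
    HasGaussianLaw (B t) (ℙ : Measure Ω) :=
  (fbm_gauss hB 1 (fun _ => t) (fun _ => ht)).eval 0

lemma fbm_incr_gauss (hB : IsFractionalBrownianMotion B H) (m : ℕ) (t s c : Fin m → ℝ)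
    (ht : ∀ i, 0 ≤ t i) (hs : ∀ i, 0 ≤ s i) :
    HasGaussianLaw (fun ω i => c i * (B (t i) ω - B (s i) ω)) (ℙ : Measure Ω) := by
  have h := fbm_gauss hB (m + m) (Fin.append t s) (fun i => by
    refine Fin.addCases (fun j => ?_) (fun j => ?_) i
    · simpa using ht j
    · rw [Fin.append_right]; exact hs j)
  have h2 := h.map_fun (ContinuousLinearMap.pi fun i : Fin m =>
    c i • (ContinuousLinearMap.proj (R := ℝ) (φ := fun _ : Fin (m+m) => ℝ) (Fin.castAdd m i)
      - ContinuousLinearMap.proj (R := ℝ) (φ := fun _ : Fin (m+m) => ℝ) (Fin.natAdd m i)))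
  refine h2.congr (ae_of_all _ fun ω => ?_)
  ext i
  simp only [ContinuousLinearMap.coe_pi', ContinuousLinearMap.smul_apply, ContinuousLinearMap.sub_apply,
    ContinuousLinearMap.proj_apply, Fin.append_left, Fin.append_right, smul_eq_mul]

lemma fbm_pair_gauss (hB : IsFractionalBrownianMotion B H) (t s t' s' c c' : ℝ)
    (ht : 0 ≤ t) (hs : 0 ≤ s) (ht' : 0 ≤ t') (hs' : 0 ≤ s') :
    HasGaussianLaw (fun ω => (c * (B t ω - B s ω), c' * (B t' ω - B s' ω))) (ℙ : Measure Ω) := by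
  have h := fbm_incr_gauss hB 2 ![t, t'] ![s, s'] ![c, c']
    (by intro i; fin_cases i <;> simpa) (by intro i; fin_cases i <;> simpa)
  exact (h.prodMk 0 1).congr (ae_of_all _ fun ω => by simp)

lemma fbm_incr_mean (hB : IsFractionalBrownianMotion B H) (t s c : ℝ) (ht : 0 ≤ t) (hs : 0 ≤ s) :
    ∫ ω, c * (B t ω - B s ω) ∂(ℙ : Measure Ω) = 0 := by
  rw [integral_const_mul, integral_sub (fbm_gauss1 hB t ht).integrable
    (fbm_gauss1 hB s hs).integrable, fbm_mean hB t ht, fbm_mean hB s hs]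
  simp

lemma fbm_dual_mean (hB : IsFractionalBrownianMotion B H) (m : ℕ) (t s c : Fin m → ℝ)
    (ht : ∀ i, 0 ≤ t i) (hs : ∀ i, 0 ≤ s i) (L : StrongDual ℝ (Fin m → ℝ)) :
    (Measure.map (fun ω i => c i * (B (t i) ω - B (s i) ω)) (ℙ : Measure Ω))[L] = 0 := by
  have h := fbm_incr_gauss hB m t s c ht hs
  rw [integral_map h.aemeasurable (by fun_prop)]
  have := L.integral_comp_comm h.integrable
  rw [this]
  have e : ∫ ω, (fun i => c i * (B (t i) ω - B (s i) ω)) ∂(ℙ : Measure Ω) = 0 := by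
    ext i
    rw [eval_integral]
    · exact fbm_incr_mean hB _ _ _ (ht i) (hs i)
    · intro i
      exact (h.eval i).integrable
  rw [e, map_zero]

lemma fbm_incr_cov (hB : IsFractionalBrownianMotion B H) (t s t' s' c c' : ℝ)
    (ht : 0 ≤ t) (hs : 0 ≤ s) (ht' : 0 ≤ t') (hs' : 0 ≤ s') :
    ∫ ω, (c * (B t ω - B s ω)) * (c' * (B t' ω - B s' ω)) ∂(ℙ : Measure Ω)
      = c * c' * ((|s' - t| ^ (2*H) + |t' - s| ^ (2*H) - |t' - t| ^ (2*H) - |s' - s| ^ (2*H)) / 2) := by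
  have hi : ∀ u v : ℝ, 0 ≤ u → 0 ≤ v → Integrable (fun ω => B u ω * B v ω) (ℙ : Measure Ω) :=
    fun u v hu hv => (fbm_gauss1 hB u hu).memLp_two.integrable_mul (fbm_gauss1 hB v hv).memLp_two
  have e : ∀ ω, (c * (B t ω - B s ω)) * (c' * (B t' ω - B s' ω))
    = c * c' * ((B t ω * B t' ω - B t ω * B s' ω) - (B s ω * B t' ω - B s ω * B s' ω)) := by
    intro ω; ring
  simp_rw [e]
  have g1 : Integrable (fun ω => B t ω * B t' ω - B t ω * B s' ω) (ℙ : Measure Ω) :=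
    (hi _ _ ht ht').sub (hi _ _ ht hs')
  have g2 : Integrable (fun ω => B s ω * B t' ω - B s ω * B s' ω) (ℙ : Measure Ω) :=
    (hi _ _ hs ht').sub (hi _ _ hs hs')
  rw [integral_const_mul, integral_sub g1 g2, integral_sub (hi _ _ ht ht') (hi _ _ ht hs'),
    integral_sub (hi _ _ hs ht') (hi _ _ hs hs'), hB.covariance _ _ ht ht', hB.covariance _ _ ht hs',
    hB.covariance _ _ hs ht', hB.covariance _ _ hs hs']
  ring

end fbm

lemma start_lemma {Ω : Type*} [MeasurableSpace Ω] {P : Measure Ω} [IsProbabilityMeasure P]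
    (Y : Ω → ℝ) (hY1 : MemLp Y 2 P) (hY4 : Integrable (fun ω => Y ω ^ 4) P) (C c : ℝ) (hC : 0 < C) (hc : 0 < c) :
    ∃ δ κ : ℝ, 0 < δ ∧ 0 < κ ∧ ∀ V : Ω → ℝ, Measurable V → MemLp V 2 P →
      ∫ ω, V ω ^ 2 ∂P ≤ C → c ≤ ∫ ω, V ω * Y ω ∂P → κ ≤ P.real {ω | δ < |V ω|} := by
  set A1 := ∫ ω, |Y ω| ∂P with hA1
  set A4 := ∫ ω, Y ω ^ 4 ∂P with hA4
  have hA1n : 0 ≤ A1 := integral_nonneg fun ω => abs_nonneg _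
  have hA4n : 0 ≤ A4 := integral_nonneg fun ω => by positivity
  set l := c / (2 * C) with hl
  have hlp : 0 < l := by positivity
  set τ := l * c / (A4 + 1) with hτ
  have hτp : 0 < τ := by positivity
  set δ := c / (4 * (A1 + 1)) with hδ
  have hδp : 0 < δ := by positivity
  refine ⟨δ, l * τ * c, hδp, by positivity, fun V hVm hV hV2 hVY => ?_⟩
  have hA : MeasurableSet {ω | δ < |V ω|} := measurableSet_lt measurable_const (by fun_prop)
  set A := {ω | δ < |V ω|} with hAdef
  have hind : Integrable (A.indicator (fun _ => (1:ℝ))) P := (integrable_const _).indicator hA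
  have hYi : Integrable (fun ω => |Y ω|) P := (hY1.integrable (by norm_num)).abs
  have hVi : Integrable (fun ω => V ω ^ 2) P := hV.integrable_sq
  have key : ∀ ω, V ω * Y ω ≤ δ * |Y ω| + (l/2) * V ω ^ 2 + (τ / (4 * l)) * Y ω ^ 4
      + (1 / (4 * l * τ)) * A.indicator (fun _ => (1:ℝ)) ω := by
    intro ω
    by_cases h : ω ∈ A
    · rw [Set.indicator_of_mem h]
      have h1 : V ω * Y ω ≤ (l/2) * V ω ^ 2 + (1/(2*l)) * Y ω ^ 2 := by
        have : (l/2) * V ω ^ 2 + (1/(2*l)) * Y ω ^ 2 - V ω * Y ω = (l * V ω - Y ω)^2 / (2 * l) := by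
          field_simp; ring
        have h2 : 0 ≤ (l * V ω - Y ω)^2 / (2 * l) := by positivity
        linarith
      have h3 : (1/(2*l)) * Y ω ^ 2 ≤ (τ / (4 * l)) * Y ω ^ 4 + (1 / (4 * l * τ)) * 1 := by
        have : (τ / (4 * l)) * Y ω ^ 4 + (1 / (4 * l * τ)) * 1 - (1/(2*l)) * Y ω ^ 2
          = (τ * Y ω ^ 2 - 1)^2 / (4 * l * τ) := by
          field_simp; ring
        have h2 : 0 ≤ (τ * Y ω ^ 2 - 1)^2 / (4 * l * τ) := by positivity
        linarith
      have : 0 ≤ δ * |Y ω| := by positivity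
      linarith
    · rw [Set.indicator_of_notMem h]
      have h' : |V ω| ≤ δ := not_lt.1 h
      have h1 : V ω * Y ω ≤ δ * |Y ω| := by
        calc V ω * Y ω ≤ |V ω * Y ω| := le_abs_self _
          _ = |V ω| * |Y ω| := abs_mul _ _
          _ ≤ _ := by gcongr
      have : 0 ≤ (l/2) * V ω ^ 2 + (τ / (4 * l)) * Y ω ^ 4 := by positivity
      linarith
  have hinteg := integral_mono (μ := P) (hV.integrable_mul hY1)
    ((((hYi.const_mul δ).add (hVi.const_mul (l/2))).add (hY4.const_mul (τ / (4*l)))).add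
      (hind.const_mul (1 / (4 * l * τ)))) (fun ω => by simpa using key ω)
  have e2 : ∫ ω, A.indicator (fun _ => (1:ℝ)) ω ∂P = P.real A := by
    rw [integral_indicator hA]; simp
  have e : ∫ ω, ((((fun ω => δ * |Y ω|) + (fun ω => (l/2) * V ω ^ 2) + (fun ω => (τ / (4 * l)) * Y ω ^ 4)
      + (fun ω => (1 / (4 * l * τ)) * A.indicator (fun _ => (1:ℝ)) ω)) : Ω → ℝ)) ω ∂P
      = δ * A1 + (l/2) * ∫ ω, V ω ^ 2 ∂P + (τ / (4 * l)) * A4 + (1 / (4 * l * τ)) * P.real A := by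
    rw [integral_add' (((hYi.const_mul δ).add (hVi.const_mul (l/2))).add (hY4.const_mul (τ / (4*l))))
      (hind.const_mul (1 / (4 * l * τ))), integral_add' ((hYi.const_mul δ).add (hVi.const_mul (l/2)))
      (hY4.const_mul (τ / (4*l))), integral_add' (hYi.const_mul δ) (hVi.const_mul (l/2)),
      integral_const_mul, integral_const_mul, integral_const_mul, integral_const_mul, e2]
  have hinteg2 : c ≤ δ * A1 + (l/2) * ∫ ω, V ω ^ 2 ∂P + (τ / (4 * l)) * A4 + (1 / (4 * l * τ)) * P.real A := by
    rw [← e]; exact hVY.trans hinteg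
  have b1 : δ * A1 ≤ c / 4 := by
    rw [hδ, div_mul_eq_mul_div, div_le_div_iff₀ (by positivity) (by norm_num)]
    nlinarith
  have b2 : (l/2) * ∫ ω, V ω ^ 2 ∂P ≤ c / 4 := by
    calc (l/2) * ∫ ω, V ω ^ 2 ∂P ≤ (l/2) * C := by gcongr
      _ = c / 4 := by rw [hl]; field_simp; ring
  have b3 : (τ / (4 * l)) * A4 ≤ c / 4 := by
    have : (τ / (4 * l)) * A4 = c * A4 / (4 * (A4 + 1)) := by rw [hτ]; field_simp
    rw [this, div_le_div_iff₀ (by positivity) (by norm_num)]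
    nlinarith
  have b4 : c / 4 ≤ (1 / (4 * l * τ)) * P.real A := by linarith
  rw [one_div_mul_eq_div, le_div_iff₀ (by positivity)] at b4
  linarith

/-- Correlation of the increments of fBm at lag `x`. -/
noncomputable def fbmRho (H x : ℝ) : ℝ := (|x + 1| ^ (2*H) + |x - 1| ^ (2*H) - 2 * |x| ^ (2*H)) / 2

lemma fbmRho_neg (H x : ℝ) : fbmRho H (-x) = fbmRho H x := by
  unfold fbmRho
  have h1 : |-x + 1| = |x - 1| := by rw [← abs_neg]; congr 1; ring
  have h2 : |-x - 1| = |x + 1| := by rw [← abs_neg]; congr 1; ring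
  rw [h1, h2, abs_neg]; ring

lemma fbmRho_zero (H : ℝ) (hH : 1/2 < H) : fbmRho H 0 = 1 := by
  unfold fbmRho
  have : (2 * H) ≠ 0 := by linarith
  simp [Real.zero_rpow this]

lemma fbmRho_bound (H : ℝ) (hH : 1/2 < H) (hH1 : H < 1) (d : ℕ) :
    0 ≤ fbmRho H d ∧ fbmRho H d ≤ 2 * ((d:ℝ) + 1) ^ (2 * H - 2) := by
  rcases Nat.eq_zero_or_pos d with rfl | hd
  · simp [fbmRho_zero H hH]
  have hd1 : (1:ℝ) ≤ d := by exact_mod_cast hd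
  have hd0 : (0:ℝ) < d := by linarith
  set u : ℝ := 1 / d with hu
  have hu0 : 0 < u := by positivity
  have hu1 : u ≤ 1 := by rw [hu, div_le_one hd0]; exact hd1
  have e1 : |(d:ℝ) + 1| ^ (2*H) = (d:ℝ) ^ (2*H) * (1 + u) ^ (2*H) := by
    rw [← Real.mul_rpow (by positivity) (by positivity), abs_of_pos (by positivity)]
    congr 1; rw [hu]; field_simp
  have e2 : |(d:ℝ) - 1| ^ (2*H) = (d:ℝ) ^ (2*H) * (1 - u) ^ (2*H) := by
    rw [← Real.mul_rpow (by positivity) (by linarith), abs_of_nonneg (by linarith)]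
    congr 1; rw [hu]; field_simp
  have e3 : |(d:ℝ)| ^ (2*H) = (d:ℝ) ^ (2*H) := by rw [abs_of_pos hd0]
  have er : fbmRho H d = (d:ℝ) ^ (2*H) * (((1 + u) ^ (2*H) + (1 - u) ^ (2*H) - 2) / 2) := by
    unfold fbmRho; rw [e1, e2, e3]; ring
  have hdp : 0 < (d:ℝ) ^ (2*H) := by positivity
  constructor
  · have l1 := one_add_mul_self_le_rpow_one_add (s := u) (by linarith) (p := 2*H) (by linarith)
    have l2 := one_add_mul_self_le_rpow_one_add (s := -u) (by linarith) (p := 2*H) (by linarith)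
    rw [← sub_eq_add_neg] at l2
    rw [er]
    apply mul_nonneg hdp.le
    linarith
  · have l1 := rpow_one_add_le_one_add_mul_self (s := 2*u+u^2) (by nlinarith) (p := H) (by linarith) hH1.le
    have l2 := rpow_one_add_le_one_add_mul_self (s := -(2*u)+u^2) (by nlinarith) (p := H) (by linarith) hH1.le
    have g1 : (1 + u) ^ (2*H) = (1 + (2*u+u^2)) ^ H := by
      rw [Real.rpow_mul (by positivity)]; congr 1; rw [Real.rpow_two]; ring
    have g2 : (1 - u) ^ (2*H) = (1 + (-(2*u)+u^2)) ^ H := by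
      rw [Real.rpow_mul (by linarith)]; congr 1; rw [Real.rpow_two]; ring
    have b : fbmRho H d ≤ (d:ℝ) ^ (2*H) * (u^2) := by
      rw [er, g1, g2]
      apply mul_le_mul_of_nonneg_left _ hdp.le
      nlinarith [sq_nonneg u]
    have b2 : (d:ℝ) ^ (2*H) * (u^2) = (d:ℝ) ^ (2*H - 2) := by
      rw [Real.rpow_sub hd0, Real.rpow_two, hu]; field_simp
    rw [b2] at b
    refine b.trans ?_
    have c1 : (2 * (d:ℝ)) ^ (2*H-2) ≤ ((d:ℝ)+1) ^ (2*H-2) :=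
      Real.rpow_le_rpow_of_nonpos (by positivity) (by linarith) (by linarith)
    rw [Real.mul_rpow (by norm_num) hd0.le] at c1
    have c2 : (1/2:ℝ) ≤ 2 ^ (2*H-2) := by
      have : (2:ℝ) ^ (-1:ℝ) ≤ 2 ^ (2*H-2) := Real.rpow_le_rpow_of_exponent_le (by norm_num) (by linarith)
      rw [Real.rpow_neg_one] at this
      linarith
    have hp : 0 < (d:ℝ) ^ (2*H-2) := by positivity
    nlinarith

lemma sum_rpow_bound (β : ℝ) (h0 : 0 < β) (h1 : β < 1) (m : ℕ) :
    ∑ d ∈ Finset.range m, ((d:ℝ)+1) ^ (-β) ≤ (m:ℝ) ^ (1-β) / (1-β) := by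
  have hb : 0 < 1 - β := by linarith
  induction m with
  | zero => simp; positivity
  | succ m ih =>
    rw [Finset.sum_range_succ]
    have hm : (0:ℝ) < (m:ℝ)+1 := by positivity
    have l1 := rpow_one_add_le_one_add_mul_self (s := -(1/((m:ℝ)+1))) (by
      rw [neg_le_neg_iff, div_le_one hm]; linarith [Nat.cast_nonneg (α := ℝ) m]) (p := 1-β) (by linarith) (by linarith)
    have e : (m:ℝ) ^ (1-β) = ((m:ℝ)+1)^(1-β) * (1 + -(1/((m:ℝ)+1)))^(1-β) := by
      rw [← Real.mul_rpow hm.le]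
      · congr 1; field_simp; ring
      · have : 1/((m:ℝ)+1) ≤ 1 := by rw [div_le_one hm]; linarith [Nat.cast_nonneg (α := ℝ) m]
        linarith
    have e2 : ((m:ℝ)+1)^(-β) = ((m:ℝ)+1)^(1-β) * (1/((m:ℝ)+1)) := by
      rw [sub_eq_add_neg, Real.rpow_add hm, Real.rpow_one]; field_simp
    have hp : 0 < ((m:ℝ)+1)^(1-β) := by positivity
    push_cast
    have : (m:ℝ) ^ (1-β) ≤ ((m:ℝ)+1)^(1-β) - (1-β) * ((m:ℝ)+1)^(-β) := by
      rw [e, e2]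
      nlinarith
    calc _ ≤ (((m:ℝ)+1)^(1-β) - (1-β) * ((m:ℝ)+1)^(-β)) / (1-β) + ((m:ℝ)+1)^(-β) := by
          gcongr; exact ih.trans (by gcongr)
      _ = _ := by field_simp; ring

lemma sum_lag_bound (w : ℝ → ℝ) (hw : ∀ x, w (-x) = w x) (b : ℕ → ℝ) (hb : ∀ d, 0 ≤ b d)
    (h : ∀ d : ℕ, w d ≤ b d) (m k : ℕ) (hk : k < m) :
    ∑ l ∈ Finset.range m, w ((l:ℝ) - k) ≤ 2 * ∑ d ∈ Finset.range m, b d := by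
  obtain ⟨j, rfl⟩ := Nat.exists_eq_add_of_le hk.le
  rw [Finset.sum_range_add, two_mul]
  have mono : ∀ i ≤ k + j, ∑ d ∈ Finset.range i, b d ≤ ∑ d ∈ Finset.range (k+j), b d := fun i hi =>
    Finset.sum_le_sum_of_subset_of_nonneg (Finset.range_mono hi) (fun _ _ _ => hb _)
  apply add_le_add
  · rw [← Finset.sum_range_reflect]
    have : ∑ x ∈ Finset.range k, w (((k - 1 - x : ℕ) : ℝ) - k) ≤ ∑ x ∈ Finset.range k, b (x+1) := by
      apply Finset.sum_le_sum
      intro x hx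
      have hx' := Finset.mem_range.1 hx
      have : (((k - 1 - x : ℕ) : ℝ) - k) = -((x+1 : ℕ) : ℝ) := by
        have : k - 1 - x = k - (x + 1) := by omega
        rw [this, Nat.cast_sub (by omega)]; ring
      rw [this, hw]; exact h _
    refine this.trans ?_
    have h2 := Finset.sum_range_succ' b k
    have := mono (k+1) (by omega)
    linarith [hb 0]
  · refine le_trans (Finset.sum_le_sum fun x _ => ?_) (mono j (by omega))
    have : (((k + x : ℕ) : ℝ) - k) = x := by push_cast; ring
    rw [this]; exact h _

lemma test_cov_bound (H : ℝ) (hH : 1/2 < H) (hH1 : H < 1) (m k : ℕ) (hk : k < m) :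
    (m:ℝ)^(2*H - 1) ≤ ((k:ℝ)+1)^(2*H) - (k:ℝ)^(2*H) + ((m:ℝ)-k)^(2*H) - ((m:ℝ)-k-1)^(2*H) := by
  have main : ∀ x : ℝ, 0 ≤ x → (x+1)^(2*H-1) ≤ (x+1)^(2*H) - x^(2*H) := by
    intro x hx
    have e : (x+1)^(2*H) = (x+1)^(2*H-1) * (x+1) := by
      rw [← Real.rpow_add_one (by positivity)]; congr 1; ring
    have e2 : x^(2*H) = x^(2*H-1) * x := by
      rcases hx.eq_or_lt with rfl | hx
      · rw [Real.zero_rpow (by linarith)]; simp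
      · rw [← Real.rpow_add_one (by positivity)]; congr 1; ring
    have : x^(2*H-1) ≤ (x+1)^(2*H-1) := Real.rpow_le_rpow hx (by linarith) (by linarith)
    rw [e, e2]; nlinarith
  have hkm : (k:ℝ) + 1 ≤ m := by exact_mod_cast hk
  have a1 := main k (by positivity)
  have a2 := main ((m:ℝ)-k-1) (by linarith)
  have e : (m:ℝ)-k-1+1 = (m:ℝ)-k := by ring
  rw [e] at a2
  have sub := Real.rpow_add_le_add_rpow (p := 2*H-1) (a := (k:ℝ)+1) (b := (m:ℝ)-k) (by positivity) (by linarith)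
    (by linarith) (by linarith)
  have : (m:ℝ)^(2*H-1) ≤ ((k:ℝ)+1 + ((m:ℝ)-k))^(2*H-1) :=
    Real.rpow_le_rpow (by positivity) (by linarith) (by linarith)
  linarith

section fbm2
variable {Ω : Type*} [MeasureSpace Ω] [IsProbabilityMeasure (ℙ : Measure Ω)] {B : ℝ → Ω → ℝ} {H : ℝ}

lemma cov_XX (hB : IsFractionalBrownianMotion B H) (m : ℕ) (hm : 0 < m) (k l : ℕ) :
    ∫ ω, ((m:ℝ)^H * (B (((k:ℝ)+1)/m) ω - B ((k:ℝ)/m) ω)) *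
      ((m:ℝ)^H * (B (((l:ℝ)+1)/m) ω - B ((l:ℝ)/m) ω)) ∂(ℙ : Measure Ω) = fbmRho H ((l:ℝ) - k) := by
  have hm' : (0:ℝ) < m := by exact_mod_cast hm
  rw [fbm_incr_cov hB _ _ _ _ _ _ (by positivity) (by positivity) (by positivity) (by positivity)]
  have key : ∀ x y : ℝ, |x / m - y / m| ^ (2*H) = |x - y| ^ (2*H) / (m:ℝ)^(2*H) := by
    intro x y
    rw [← sub_div, abs_div, abs_of_pos hm', Real.div_rpow (abs_nonneg _) hm'.le]
  have e : (m:ℝ)^H * (m:ℝ)^H = (m:ℝ)^(2*H) := by rw [← Real.rpow_add hm']; congr 1; ring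
  rw [key, key, key, key, e]
  have hp : (m:ℝ)^(2*H) ≠ 0 := by positivity
  unfold fbmRho
  have a1 : (l:ℝ) - (k+1) = l - k - 1 := by ring
  have a2 : (l:ℝ) + 1 - k = l - k + 1 := by ring
  have a3 : (l:ℝ) + 1 - (k+1) = l - k := by ring
  rw [a1, a2, a3]
  field_simp
  ring

lemma cov_X1 (hB : IsFractionalBrownianMotion B H) (hH : 1/2 < H) (hH1 : H < 1) (m : ℕ) (k : ℕ) (hk : k < m) :
    (m:ℝ)^(H-1) / 2 ≤ ∫ ω, ((m:ℝ)^H * (B (((k:ℝ)+1)/m) ω - B ((k:ℝ)/m) ω)) *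
      (1 * (B 1 ω - B 0 ω)) ∂(ℙ : Measure Ω) := by
  have hm' : (0:ℝ) < m := by exact_mod_cast (by omega : 0 < m)
  have hkm : (k:ℝ) + 1 ≤ m := by exact_mod_cast hk
  rw [fbm_incr_cov hB _ _ _ _ _ _ (by positivity) (by positivity) (by positivity) le_rfl]
  have key : ∀ x y : ℝ, |x / m - y / m| ^ (2*H) = |x - y| ^ (2*H) / (m:ℝ)^(2*H) := by
    intro x y
    rw [← sub_div, abs_div, abs_of_pos hm', Real.div_rpow (abs_nonneg _) hm'.le]
  have c1 : ∀ y : ℝ, |1 - y / m| ^ (2*H) = |(m:ℝ) - y| ^ (2*H) / (m:ℝ)^(2*H) := by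
    intro y; rw [← key, div_self hm'.ne']
  have c0 : ∀ y : ℝ, |0 - y / m| ^ (2*H) = |(0:ℝ) - y| ^ (2*H) / (m:ℝ)^(2*H) := by
    intro y; rw [← key, zero_div]
  rw [c1, c1, c0, c0]
  have a1 : |(0:ℝ) - (k+1)| = k + 1 := by rw [zero_sub, abs_neg, abs_of_nonneg (by positivity)]
  have a2 : |(0:ℝ) - k| = k := by rw [zero_sub, abs_neg, abs_of_nonneg (by positivity)]
  have a3 : |(m:ℝ) - k| = m - k := abs_of_nonneg (by linarith)
  have a4 : |(m:ℝ) - (k+1)| = m - k - 1 := by rw [abs_of_nonneg (by linarith)]; ring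
  rw [a1, a2, a3, a4]
  have t := test_cov_bound H hH hH1 m k hk
  have e : (m:ℝ)^(2*H) = (m:ℝ)^H * (m:ℝ)^H := by rw [← Real.rpow_add hm']; congr 1; ring
  have e2 : (m:ℝ)^(2*H-1) = (m:ℝ)^(H-1) * (m:ℝ)^H := by rw [← Real.rpow_add hm']; congr 1; ring
  have hp : 0 < (m:ℝ)^H := by positivity
  have : (m:ℝ)^H * 1 * ((((k:ℝ)+1)^(2*H) / (m:ℝ)^(2*H) + ((m:ℝ)-k)^(2*H) / (m:ℝ)^(2*H)
      - ((m:ℝ)-k-1)^(2*H)/ (m:ℝ)^(2*H) - (k:ℝ)^(2*H)/ (m:ℝ)^(2*H))/2)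
      = (((k:ℝ)+1)^(2*H) - (k:ℝ)^(2*H) + ((m:ℝ)-k)^(2*H) - ((m:ℝ)-k-1)^(2*H)) / (2 * (m:ℝ)^H) := by
    rw [e]; field_simp; ring
  rw [this, le_div_iff₀ (by positivity)]
  rw [e2] at t
  linarith

lemma X_gauss (hB : IsFractionalBrownianMotion B H) (m k : ℕ) :
    HasGaussianLaw (fun ω => (m:ℝ)^H * (B (((k:ℝ)+1)/m) ω - B ((k:ℝ)/m) ω)) (ℙ : Measure Ω) :=
  (fbm_pair_gauss hB (((k:ℝ)+1)/m) ((k:ℝ)/m) (((k:ℝ)+1)/m) ((k:ℝ)/m) ((m:ℝ)^H) 1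
    (by positivity) (by positivity) (by positivity) (by positivity)).fst

lemma hX_memLp (hB : IsFractionalBrownianMotion B H) (q m k : ℕ) :
    MemLp (fun ω => Polynomial.aeval ((m:ℝ)^H * (B (((k:ℝ)+1)/m) ω - B ((k:ℝ)/m) ω))
      (Polynomial.hermite q)) 2 (ℙ : Measure Ω) := by
  simp_rw [aeval_hermite_eq]
  exact memLp_gauss_poly (X_gauss hB m k) _ 2 (by simp)

lemma V_memLp (hB : IsFractionalBrownianMotion B H) (q m : ℕ) :
    MemLp (hermiteVariation B H q m) 2 (ℙ : Measure Ω) := by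
  have := memLp_finsetSum (Finset.range m) (fun k _ => hX_memLp hB q m k)
  exact this.congr_norm (by
    exact (memLp_finsetSum (Finset.range m) (fun k _ => hX_memLp hB q m k)).1) (ae_of_all _ fun ω => by
    simp [hermiteVariation])

lemma V_meas (hB : IsFractionalBrownianMotion B H) (q m : ℕ) :
    Measurable (hermiteVariation B H q m) := by
  unfold hermiteVariation
  refine Finset.measurable_sum _ fun k _ => ?_
  have : Measurable (fun x : ℝ => Polynomial.aeval x (Polynomial.hermite q)) := by
    simp_rw [aeval_hermite_eq]
    exact (Polynomial.continuous _).measurable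
  exact this.comp (((hB.measurable _).sub (hB.measurable _)).const_mul _)

lemma cov_HH (hB : IsFractionalBrownianMotion B H) (hH : 1/2 < H) (q m : ℕ) (hm : 0 < m) (k l : ℕ) :
    ∫ ω, Polynomial.aeval ((m:ℝ)^H * (B (((k:ℝ)+1)/m) ω - B ((k:ℝ)/m) ω)) (Polynomial.hermite q) *
      Polynomial.aeval ((m:ℝ)^H * (B (((l:ℝ)+1)/m) ω - B ((l:ℝ)/m) ω)) (Polynomial.hermite q)
      ∂(ℙ : Measure Ω) = q.factorial * fbmRho H ((l:ℝ) - k) ^ q := by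
  refine hermite_cov (fbm_pair_gauss hB _ _ _ _ _ _
    (by positivity) (by positivity) (by positivity) (by positivity))
    (fbm_incr_mean hB _ _ _ (by positivity) (by positivity)) ?_ _ (cov_XX hB m hm k l) q
  have := cov_XX hB m hm k k
  rw [sub_self, fbmRho_zero H hH] at this
  simpa only [sq] using this

lemma cov_H1 (hB : IsFractionalBrownianMotion B H) (hH : 1/2 < H) (hH1 : H < 1) (q m : ℕ) (k : ℕ) (hk : k < m) :
    q.factorial * ((m:ℝ)^(H-1) / 2) ^ q ≤
    ∫ ω, Polynomial.aeval ((m:ℝ)^H * (B (((k:ℝ)+1)/m) ω - B ((k:ℝ)/m) ω)) (Polynomial.hermite q) *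
      Polynomial.aeval (1 * (B 1 ω - B 0 ω)) (Polynomial.hermite q)
      ∂(ℙ : Measure Ω) := by
  have hm : 0 < m := by omega
  have h2 := cov_XX hB m hm k k
  rw [sub_self, fbmRho_zero H hH] at h2
  rw [hermite_cov (fbm_pair_gauss hB (((k:ℝ)+1)/m) ((k:ℝ)/m) 1 0 ((m:ℝ)^H) 1
    (by positivity) (by positivity) (by positivity) le_rfl)
    (fbm_incr_mean hB _ _ _ (by positivity) (by positivity)) (by simpa only [sq] using h2) _ rfl q]
  gcongr
  exact cov_X1 hB hH hH1 m k hk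

lemma V_second (hB : IsFractionalBrownianMotion B H) (hH : 1/2 < H) (hH1 : H < 1) (q m : ℕ) (hm : 0 < m)
    (hq : 0 < q) (hβ : 2 * q * (1 - H) < 1) :
    ∫ ω, hermiteVariation B H q m ω ^ 2 ∂(ℙ : Measure Ω) ≤
      (q.factorial * 2 * 2 ^ q / (1 - 2 * q * (1-H))) * (m:ℝ) ^ (2 - 2 * q * (1-H)) := by
  have hm' : (0:ℝ) < m := by exact_mod_cast hm
  set β := 2 * q * (1-H) with hβd
  have hq' : (0:ℝ) < q := by exact_mod_cast hq
  have hβ0 : 0 < β := by have : 0 < 1 - H := by linarith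
                         positivity
  have e : ∀ ω, hermiteVariation B H q m ω ^ 2 = ∑ k ∈ Finset.range m, ∑ l ∈ Finset.range m,
     Polynomial.aeval ((m:ℝ)^H * (B (((k:ℝ)+1)/m) ω - B ((k:ℝ)/m) ω)) (Polynomial.hermite q) *
      Polynomial.aeval ((m:ℝ)^H * (B (((l:ℝ)+1)/m) ω - B ((l:ℝ)/m) ω)) (Polynomial.hermite q) := by
    intro ω
    rw [sq, hermiteVariation, Finset.sum_mul_sum]
  have hi : ∀ k l : ℕ, Integrable (fun ω =>
     Polynomial.aeval ((m:ℝ)^H * (B (((k:ℝ)+1)/m) ω - B ((k:ℝ)/m) ω)) (Polynomial.hermite q) *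
      Polynomial.aeval ((m:ℝ)^H * (B (((l:ℝ)+1)/m) ω - B ((l:ℝ)/m) ω)) (Polynomial.hermite q))
      (ℙ : Measure Ω) := fun k l => (hX_memLp hB q m k).integrable_mul (hX_memLp hB q m l)
  simp_rw [e]
  rw [integral_finsetSum _ (fun k _ => integrable_finsetSum _ fun l _ => hi k l)]
  simp_rw [integral_finsetSum _ (fun l _ => hi _ l), cov_HH hB hH q m hm, ← Finset.mul_sum]
  have inner : ∀ k ∈ Finset.range m, ∑ l ∈ Finset.range m, fbmRho H ((l:ℝ) - k) ^ q
      ≤ 2 * (2 ^ q * ((m:ℝ) ^ (1-β) / (1-β))) := by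
    intro k hk
    refine (sum_lag_bound (fun x => fbmRho H x ^ q) (fun x => by simp only [fbmRho_neg])
      (fun d => 2 ^ q * ((d:ℝ)+1) ^ (-β)) (fun d => by positivity) (fun d => ?_) m k
      (Finset.mem_range.1 hk)).trans ?_
    · have b := fbmRho_bound H hH hH1 d
      refine (pow_le_pow_left₀ b.1 b.2 q).trans (le_of_eq ?_)
      rw [mul_pow, ← Real.rpow_natCast (_ ^ _) q, ← Real.rpow_mul (by positivity)]
      congr 2; rw [hβd]; ring
    · rw [← Finset.mul_sum]
      gcongr
      exact sum_rpow_bound β hβ0 hβ m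
  calc _ ≤ (q.factorial : ℝ) * ∑ k ∈ Finset.range m, (2 * (2 ^ q * ((m:ℝ) ^ (1-β) / (1-β)))) := by
        gcongr with k hk; exact inner k hk
    _ = _ := by
        rw [Finset.sum_const, Finset.card_range, nsmul_eq_mul]
        have : (m:ℝ)^(2-β) = m * (m:ℝ)^(1-β) := by
          rw [← Real.rpow_one_add' hm'.le (by linarith)]; congr 1; ring
        rw [this]; ring

lemma V_test (hB : IsFractionalBrownianMotion B H) (hH : 1/2 < H) (hH1 : H < 1) (q m : ℕ) (hm : 0 < m) :
    (q.factorial / 2 ^ q) * (m:ℝ) ^ (1 - q * (1-H)) ≤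
    ∫ ω, hermiteVariation B H q m ω *
      Polynomial.aeval (1 * (B 1 ω - B 0 ω)) (Polynomial.hermite q) ∂(ℙ : Measure Ω) := by
  have hm' : (0:ℝ) < m := by exact_mod_cast hm
  have hY : MemLp (fun ω => Polynomial.aeval (1 * (B 1 ω - B 0 ω)) (Polynomial.hermite q)) 2 (ℙ : Measure Ω) := by
    have := hX_memLp hB q 1 0
    simpa using this
  have e : ∀ ω, hermiteVariation B H q m ω *
      Polynomial.aeval (1 * (B 1 ω - B 0 ω)) (Polynomial.hermite q) = ∑ k ∈ Finset.range m,
     Polynomial.aeval ((m:ℝ)^H * (B (((k:ℝ)+1)/m) ω - B ((k:ℝ)/m) ω)) (Polynomial.hermite q) *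
      Polynomial.aeval (1 * (B 1 ω - B 0 ω)) (Polynomial.hermite q) := by
    intro ω
    rw [hermiteVariation, Finset.sum_mul]
  simp_rw [e]
  have hi : ∀ k : ℕ, Integrable (fun ω =>
     Polynomial.aeval ((m:ℝ)^H * (B (((k:ℝ)+1)/m) ω - B ((k:ℝ)/m) ω)) (Polynomial.hermite q) *
      Polynomial.aeval (1 * (B 1 ω - B 0 ω)) (Polynomial.hermite q))
      (ℙ : Measure Ω) := fun k => (hX_memLp hB q m k).integrable_mul hY
  rw [integral_finsetSum _ (fun k _ => hi k)]
  refine le_trans (le_of_eq ?_) (Finset.sum_le_sum fun k hk => cov_H1 hB hH hH1 q m k (Finset.mem_range.1 hk))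
  rw [Finset.sum_const, Finset.card_range, nsmul_eq_mul, div_pow, ← Real.rpow_natCast (_ ^ _) q,
    ← Real.rpow_mul hm'.le]
  have : (m:ℝ)^(1 - q*(1-H)) = m * (m:ℝ)^((H-1)*q) := by
    conv_rhs => rw [← Real.rpow_one (m:ℝ), ← Real.rpow_mul hm'.le, ← Real.rpow_add hm']
    congr 1; ring
  rw [this]; ring

end fbm2

section fbm3
variable {Ω : Type*} [MeasureSpace Ω] [IsProbabilityMeasure (ℙ : Measure Ω)] {B : ℝ → Ω → ℝ} {H : ℝ}

lemma V_cheb (hB : IsFractionalBrownianMotion B H) (q m : ℕ) (C : ℝ) (b : ℝ) (hb : 0 < b)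
    (hC : ∫ ω, hermiteVariation B H q m ω ^ 2 ∂(ℙ : Measure Ω) ≤ C * b ^ 2) (x : ℝ) (hx : 0 < x) :
    (ℙ : Measure Ω).real {ω | x * b < |hermiteVariation B H q m ω|} ≤ C / x ^ 2 := by
  have h := mul_meas_ge_le_integral_of_nonneg (μ := (ℙ : Measure Ω))
    (f := fun ω => hermiteVariation B H q m ω ^ 2) (ae_of_all _ fun ω => by positivity)
    (V_memLp hB q m).integrable_sq ((x * b) ^ 2)
  have hs : (ℙ : Measure Ω).real {ω | x * b < |hermiteVariation B H q m ω|} ≤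
      (ℙ : Measure Ω).real {ω | (x * b) ^ 2 ≤ hermiteVariation B H q m ω ^ 2} := by
    refine measureReal_mono ?_ (measure_ne_top _ _)
    intro ω hω
    simp only [Set.mem_ofPred_eq] at hω ⊢
    rw [← sq_abs (hermiteVariation B H q m ω)]
    exact pow_le_pow_left₀ (by positivity) hω.le 2
  refine hs.trans ?_
  have h2 := h.trans hC
  rw [le_div_iff₀ (by positivity)]
  rw [mul_pow] at h2
  have hb2 : 0 < b ^ 2 := by positivity
  refine le_of_mul_le_mul_right ?_ hb2
  rw [mul_pow]
  linarith

lemma V_anti_step (hB : IsFractionalBrownianMotion B H) (q N : ℕ) : ∃ C : ℝ, 0 < C ∧ ∀ (m : ℕ) (δ : ℝ),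
    N * (ℙ : Measure Ω).real {ω | |hermiteVariation B H q m ω| ≤ δ} ≤
      2 * q + N * ((ℙ : Measure Ω).real {ω | |hermiteVariation B H q m ω| ≤ C * δ}) ^ 2 := by
  obtain ⟨C, hC, h⟩ := anti_step q N
  refine ⟨C, hC, fun m δ => ?_⟩
  have hg := fbm_incr_gauss hB m (fun i => ((i:ℝ)+1)/m) (fun i => (i:ℝ)/m) (fun _ => (m:ℝ)^H)
    (fun i => by positivity) (fun i => by positivity)
  have hL := fbm_dual_mean hB m (fun i => ((i:ℝ)+1)/m) (fun i => (i:ℝ)/m) (fun _ => (m:ℝ)^H)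
    (fun i => by positivity) (fun i => by positivity)
  have hG := hg.isGaussian_map
  have h3 := h m _ hL ((Polynomial.hermite q).map (Int.castRingHom ℝ))
    (Polynomial.natDegree_map_le.trans (by rw [Polynomial.natDegree_hermite])) δ
  have key : ∀ δ : ℝ, (Measure.map (fun ω (i : Fin m) => (m:ℝ)^H * (B (((i:ℝ)+1)/m) ω - B ((i:ℝ)/m) ω))
      (ℙ : Measure Ω)).real
      {x | |∑ k, ((Polynomial.hermite q).map (Int.castRingHom ℝ)).eval (x k)| ≤ δ} =
      (ℙ : Measure Ω).real {ω | |hermiteVariation B H q m ω| ≤ δ} := by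
    intro δ
    have hms : MeasurableSet {x : Fin m → ℝ |
        |∑ k, ((Polynomial.hermite q).map (Int.castRingHom ℝ)).eval (x k)| ≤ δ} := by
      apply IsClosed.measurableSet
      apply isClosed_le _ continuous_const
      apply Continuous.abs
      refine continuous_finsetSum _ fun k _ => ?_
      exact (Polynomial.continuous _).comp (continuous_apply k)
    rw [measureReal_def, Measure.map_apply_of_aemeasurable hg.aemeasurable hms, measureReal_def]
    congr 2
    ext ω
    simp only [Set.mem_preimage, Set.mem_ofPred_eq, hermiteVariation, aeval_hermite_eq]
    rw [Finset.sum_range]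
  rw [key, key] at h3
  exact h3

end fbm3

theorem stmt_7 {Ω : Type*} [MeasureSpace Ω] [IsProbabilityMeasure (ℙ : Measure Ω)]
    (q : ℕ) (hq : 2 ≤ q) (H : ℝ) (hH0 : 1 - 1 / (2 * q) < H) (hH1 : H < 1)
    (B : ℝ → Ω → ℝ) (hB : IsFractionalBrownianMotion B H) :
    Tendsto
      (fun ε : ℝ =>
        (1 / (-Real.log ε)) *
          ∑' n : ℕ, (1 / ((n : ℝ) + 1)) *
            (ℙ {ω | ε * ((n : ℝ) + 1) ^ (2 - 2 * q * (1 - H)) <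
              |hermiteVariation B H q (n + 1) ω|}).toReal)
      (𝓝[>] 0) (𝓝 (1 / (1 - q * (1 - H)))) := by
  have hq0 : (0:ℝ) < q := by exact_mod_cast (by omega : 0 < q)
  have hq2 : (2:ℝ) ≤ q := by exact_mod_cast hq
  have hβ : 2 * q * (1 - H) < 1 := by
    have h1 : 1 - H < 1 / (2 * q) := by linarith
    rw [lt_div_iff₀ (by positivity)] at h1
    linarith
  have hH : 1/2 < H := by nlinarith
  set a : ℝ := 1 - q * (1 - H) with had
  have ha : 1 / 2 < a := by rw [had]; linarith
  set C : ℝ := q.factorial * 2 * 2 ^ q / (1 - 2 * q * (1-H)) with hCd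
  have hCp : 0 < C := by
    have : 0 < 1 - 2 * q * (1-H) := by linarith
    have : (0:ℝ) < q.factorial := by exact_mod_cast q.factorial_pos
    positivity
  have hbp : ∀ n : ℕ, 0 < ((n:ℝ)+1) ^ a := fun n => by positivity
  have hsec : ∀ n : ℕ, ∫ ω, hermiteVariation B H q (n+1) ω ^ 2 ∂(ℙ : Measure Ω)
      ≤ C * (((n:ℝ)+1)^a)^2 := by
    intro n
    have h := V_second hB hH hH1 q (n+1) (by omega) (by omega) hβ
    push_cast at h
    have e : (((n:ℝ)+1)^a)^2 = ((n:ℝ)+1)^(2 - 2*q*(1-H)) := by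
      rw [← Real.rpow_natCast (_ ^ _) 2, ← Real.rpow_mul (by positivity)]
      congr 1; rw [had]; push_cast; ring
    rw [e]; exact h
  have hcompl : ∀ (n : ℕ) (x : ℝ), (ℙ : Measure Ω).real {ω | x * ((n:ℝ)+1)^a < |hermiteVariation B H q (n+1) ω|}
      = 1 - (ℙ : Measure Ω).real {ω | |hermiteVariation B H q (n+1) ω| ≤ x * ((n:ℝ)+1)^a} := by
    intro n x
    have hms : MeasurableSet {ω | |hermiteVariation B H q (n+1) ω| ≤ x * ((n:ℝ)+1)^a} :=
      measurableSet_le (V_meas hB q (n+1)).abs measurable_const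
    rw [← probReal_compl_eq_one_sub hms]
    congr 1
    ext ω
    simp
  -- anti-concentration
  have hanti : ∀ η > 0, ∃ δ > 0, ∀ n : ℕ,
      (ℙ : Measure Ω).real {ω | |hermiteVariation B H q (n+1) ω| ≤ δ * ((n:ℝ)+1)^a} ≤ η := by
    have hY : HasGaussianLaw (fun ω => (1:ℝ) * (B 1 ω - B 0 ω)) (ℙ : Measure Ω) :=
      (fbm_pair_gauss hB 1 0 1 0 1 1 (by norm_num) le_rfl (by norm_num) le_rfl).fst
    have hY2 : MemLp (fun ω => Polynomial.aeval ((1:ℝ) * (B 1 ω - B 0 ω)) (Polynomial.hermite q)) 2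
        (ℙ : Measure Ω) := by
      simp_rw [aeval_hermite_eq]
      exact memLp_gauss_poly hY _ 2 (by simp)
    have hY4 : Integrable (fun ω => (Polynomial.aeval ((1:ℝ) * (B 1 ω - B 0 ω)) (Polynomial.hermite q)) ^ 4)
        (ℙ : Measure Ω) := by
      have := memLp_gauss_poly hY (((Polynomial.hermite q).map (Int.castRingHom ℝ)) ^ 4) 1 (by simp)
      rw [memLp_one_iff_integrable] at this
      simp_rw [aeval_hermite_eq]
      simpa only [Polynomial.eval_pow] using this
    obtain ⟨δ₀, κ, hδ₀, hκ, hst⟩ := start_lemma _ hY2 hY4 C (q.factorial / 2 ^ q) hCp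
      (by have : (0:ℝ) < q.factorial := by exact_mod_cast q.factorial_pos
          positivity)
    refine anti_limit (fun (n : ℕ) δ =>
      (ℙ : Measure Ω).real {ω | |hermiteVariation B H q (n+1) ω| ≤ δ * ((n:ℝ)+1)^a})
      (fun _ _ => measureReal_nonneg) (2 * q) κ δ₀ hκ hδ₀ (fun n => ?_) (fun N => ?_)
    · have hb := hbp n
      have h := hst (fun ω => (((n:ℝ)+1)^a)⁻¹ * hermiteVariation B H q (n+1) ω)
        ((V_meas hB q (n+1)).const_mul _) ((V_memLp hB q (n+1)).const_mul _) (by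
          simp_rw [mul_pow]
          rw [integral_const_mul, inv_pow, inv_mul_le_iff₀ (by positivity)]
          linarith [hsec n]) (by
          simp_rw [mul_assoc]
          rw [integral_const_mul, le_inv_mul_iff₀ hb]
          have := V_test hB hH hH1 q (n+1) (by omega)
          push_cast at this
          rw [← had] at this
          linarith)
      have e : {ω | δ₀ < |(((n:ℝ)+1)^a)⁻¹ * hermiteVariation B H q (n+1) ω|} =
          {ω | δ₀ * ((n:ℝ)+1)^a < |hermiteVariation B H q (n+1) ω|} := by
        ext ω
        simp only [Set.mem_ofPred_eq]
        rw [abs_mul, abs_inv, abs_of_pos hb, lt_inv_mul_iff₀ hb, mul_comm]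
      rw [e, hcompl] at h
      linarith
    · obtain ⟨K, hK, h⟩ := V_anti_step hB q N
      refine ⟨K, hK, fun n δ => ?_⟩
      have := h (n+1) (δ * ((n:ℝ)+1)^a)
      rw [← mul_assoc] at this
      exact this
  have hfin := spitzer a ha
    (fun n x => (ℙ : Measure Ω).real {ω | x * ((n:ℝ)+1)^a < |hermiteVariation B H q (n+1) ω|})
    (fun _ _ => measureReal_nonneg) (fun _ _ => measureReal_le_one) C hCp.le
    (fun n x hx => V_cheb hB q (n+1) C _ (hbp n) (hsec n) x hx) (fun η hη => by
      obtain ⟨δ, hδ, h⟩ := hanti η hη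
      refine ⟨δ, hδ, fun n x hx => ?_⟩
      rw [hcompl]
      have : (ℙ : Measure Ω).real {ω | |hermiteVariation B H q (n+1) ω| ≤ x * ((n:ℝ)+1)^a} ≤
          (ℙ : Measure Ω).real {ω | |hermiteVariation B H q (n+1) ω| ≤ δ * ((n:ℝ)+1)^a} := by
        refine measureReal_mono ?_ (measure_ne_top _ _)
        intro ω hω
        exact le_trans (show _ from hω) (mul_le_mul_of_nonneg_right hx (hbp n).le)
      linarith [h n])
  have hee : ∀ (ε : ℝ) (n : ℕ), ε * ((n:ℝ)+1)^(2 - 2*q*(1-H)) = ε * ((n:ℝ)+1)^a * ((n:ℝ)+1)^a := by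
    intro ε n
    rw [mul_assoc ε, ← Real.rpow_add (by positivity)]
    congr 2; rw [had]; ring
  simp_rw [hee]
  exact hfin
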